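/- Theorem 7.2 (finite speed of shrinking of the limit phase): Let d ≥ 2, assume m satisfies the mobility assumptions with lower bound θ > 0 and W the double-well assumptions. Let u₀ : ℝ^d → [-1,1] be uniformly continuous and, for each ε > 0, let u^ε : ℝ^d × [0,∞) → [-1,1] be a continuous viscosity solution of m(ε⁻¹x, εDu^ε) u^ε_t − Δu^ε + ε⁻² W'(u^ε) = 0 in ℝ^d × (0,∞) with u^ε(·,0) = u₀. For (x,t) ∈ ℝ^d × [0,∞) define liminf_* u^ε(x,t) = lim_{δ→0⁺} inf { u^ε(y,s) : ε + ‖x − y‖ + |t − s| ≤ δ, s > 0 }, and for t ≥ 0 set Ω_t^{(1)} = { x ∈ ℝ^d : liminf_* u^ε(x,t) = 1 }. If R > 0, t₀ ≥ 0, x₀ ∈ ℝ^d, the open ball B(x₀,R) is contained in Ω_{t₀}^{(1)}, and 0 < θ̲ < θ, then B(x₀, √(R² − 2θ̲⁻¹(d−1)s)) ⊆ Ω_{t₀+s}^{(1)} for every s ∈ [0, θ̲R²/(2(d−1))]. -/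

import Mathlib

open Set Filter Topology MeasureTheory

noncomputable section

abbrev Euc (d : ℕ) := EuclideanSpace ℝ (Fin d)

def IsIntVec {d : ℕ} (z : Euc d) : Prop := ∀ i, ∃ n : ℤ, z i = (n : ℝ)

noncomputable def clTrace {d : ℕ} (A : Euc d →L[ℝ] Euc d) : ℝ :=
  LinearMap.trace ℝ (Euc d) (A : Euc d →ₗ[ℝ] Euc d)

noncomputable def spaceGrad {d : ℕ} (φ : Euc d × ℝ → ℝ) (x : Euc d) (t : ℝ) : Euc d :=
  gradient (fun y => φ (y, t)) x

noncomputable def spaceHess {d : ℕ} (φ : Euc d × ℝ → ℝ) (x : Euc d) (t : ℝ) :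
    Euc d →L[ℝ] Euc d :=
  fderiv ℝ (fun y => gradient (fun z => φ (z, t)) y) x

noncomputable def spaceLap {d : ℕ} (φ : Euc d × ℝ → ℝ) (x : Euc d) (t : ℝ) : ℝ :=
  clTrace (spaceHess φ x t)

noncomputable def timeDeriv {d : ℕ} (φ : Euc d × ℝ → ℝ) (x : Euc d) (t : ℝ) : ℝ :=
  deriv (fun s => φ (x, s)) t

def DoubleWell (W : ℝ → ℝ) : Prop :=
  ContDiff ℝ 3 W ∧
  (∀ u ∈ Set.Icc (-1:ℝ) 1, 0 ≤ W u) ∧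
  W (-1) = 0 ∧ W 1 = 0 ∧
  (∀ u ∈ Set.Ioo (-1:ℝ) 1, 0 < W u) ∧
  deriv W (-1) = 0 ∧ deriv W 0 = 0 ∧ deriv W 1 = 0 ∧
  (∀ u ∈ Set.Ioo (-1:ℝ) 0, 0 < deriv W u) ∧
  (∀ u ∈ Set.Ioo (0:ℝ) 1, deriv W u < 0) ∧
  0 < deriv (deriv W) (-1) ∧ 0 < deriv (deriv W) 1 ∧ deriv (deriv W) 0 < 0

def Mobility (d : ℕ) (m : Euc d → Euc d → ℝ) (θ Θ : ℝ) : Prop :=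
  Continuous (fun p : Euc d × Euc d => m p.1 p.2) ∧
  (∀ y v z, IsIntVec z → m (y + z) v = m y v) ∧
  0 < θ ∧ (∀ y v, θ ≤ m y v ∧ m y v ≤ Θ) ∧
  (∃ H : ℝ, ∀ y y' v, |m y v - m y' v| ≤ H * ‖y - y'‖)

/-- Viscosity solution of m(ε⁻¹x, εDu) u_t − Δu + ε⁻²W'(u) = 0 in ℝ^d × (0,∞). -/
def IsEpsSolution {d : ℕ} (m : Euc d → Euc d → ℝ) (W : ℝ → ℝ) (ε : ℝ)
    (u : Euc d × ℝ → ℝ) : Prop :=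
  (∀ φ : Euc d × ℝ → ℝ, ContDiff ℝ (⊤ : ℕ∞) φ → ∀ (x : Euc d) (t : ℝ), 0 < t →
    IsLocalMaxOn (fun p => u p - φ p) {p : Euc d × ℝ | 0 < p.2} (x, t) →
      m (ε⁻¹ • x) (ε • spaceGrad φ x t) * timeDeriv φ x t - spaceLap φ x t
        + ε⁻¹ ^ 2 * deriv W (u (x, t)) ≤ 0) ∧
  (∀ φ : Euc d × ℝ → ℝ, ContDiff ℝ (⊤ : ℕ∞) φ → ∀ (x : Euc d) (t : ℝ), 0 < t →
    IsLocalMinOn (fun p => u p - φ p) {p : Euc d × ℝ | 0 < p.2} (x, t) →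
      0 ≤ m (ε⁻¹ • x) (ε • spaceGrad φ x t) * timeDeriv φ x t - spaceLap φ x t
        + ε⁻¹ ^ 2 * deriv W (u (x, t)))

/-- The lower half-relaxed limit liminf_* u^ε(x,t), expressed as the (monotone)
supremum over δ > 0 of the infima over points (and ε) δ-close to (x,t). -/
noncomputable def liminfStar {d : ℕ} (uu : ℝ → Euc d × ℝ → ℝ) (p : Euc d × ℝ) : ℝ :=
  ⨆ δ : {r : ℝ // 0 < r}, sInf {r : ℝ | ∃ (ε : ℝ) (y : Euc d) (s : ℝ),
    0 < ε ∧ 0 < s ∧ ε + ‖p.1 - y‖ + |p.2 - s| ≤ (δ : ℝ) ∧ r = uu ε (y, s)}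

/-- The supersolution inequality may be tested with functions that are only smooth near the
point of contact. -/
theorem IsEpsSolution.supersolution_of_eventually_smooth {d : ℕ} {m : Euc d → Euc d → ℝ}
    {W : ℝ → ℝ} {ε : ℝ} {u : Euc d × ℝ → ℝ} (hu : IsEpsSolution m W ε u)
    {φ : Euc d × ℝ → ℝ} {x : Euc d} {t : ℝ} (ht : 0 < t)
    (hφ : ∀ᶠ p in 𝓝 (x, t), ContDiffAt ℝ (⊤ : ℕ∞) φ p)
    (hmin : ∀ᶠ p in 𝓝 (x, t), u (x, t) - φ (x, t) ≤ u p - φ p) :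
    ∃ v : Euc d, 0 ≤ m (ε⁻¹ • x) v * timeDeriv φ x t - spaceLap φ x t
        + ε⁻¹ ^ 2 * deriv W (u (x, t)) := by
  obtain ⟨r, hr, hball⟩ := Metric.eventually_nhds_iff_ball.1 hφ
  let f : ContDiffBump (x, t) := ⟨r / 4, r / 2, by positivity, by linarith⟩
  set ψ : Euc d × ℝ → ℝ := fun p => f p * φ p with hψ
  have hψφ : ψ =ᶠ[𝓝 (x, t)] φ := by
    filter_upwards [f.eventuallyEq_one] with p hp
    simp [hψ, hp]
  have hsm : ContDiff ℝ (⊤ : ℕ∞) ψ := by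
    refine contDiff_iff_contDiffAt.2 fun p => ?_
    by_cases hp : p ∈ Metric.ball (x, t) r
    · exact f.contDiffAt.mul (hball p hp)
    · have hp' : p ∉ tsupport f := by
        rw [f.tsupport_eq]
        simp only [Metric.mem_ball, not_lt] at hp
        simp only [Metric.mem_closedBall, not_le]
        change r / 2 < _
        linarith
      have : ψ =ᶠ[𝓝 p] fun _ => 0 := by
        filter_upwards [notMem_tsupport_iff_eventuallyEq.1 hp'] with q hq
        simp [hψ, hq]
      exact contDiffAt_const.congr_of_eventuallyEq this
  have hloc : IsLocalMinOn (fun p => u p - ψ p) {p : Euc d × ℝ | 0 < p.2} (x, t) := by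
    refine Filter.Eventually.filter_mono nhdsWithin_le_nhds ?_
    filter_upwards [hmin, hψφ] with p hp hq
    rw [hq, hψφ.self_of_nhds]
    exact hp
  have hx : ∀ᶠ y in 𝓝 x, ∀ᶠ z in 𝓝 y, ψ (z, t) = φ (z, t) := by
    refine Filter.Eventually.eventually_nhds ?_
    have : Tendsto (fun y : Euc d => (y, t)) (𝓝 x) (𝓝 (x, t)) :=
      (Continuous.prodMk_left t).tendsto x
    exact this.eventually hψφ
  have ht' : ∀ᶠ s in 𝓝 t, ψ (x, s) = φ (x, s) := by
    have : Tendsto (fun s : ℝ => (x, s)) (𝓝 t) (𝓝 (x, t)) :=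
      (Continuous.prodMk_right x).tendsto t
    exact this.eventually hψφ
  have h1 : timeDeriv ψ x t = timeDeriv φ x t := Filter.EventuallyEq.deriv_eq ht'
  have h2 : spaceLap ψ x t = spaceLap φ x t := by
    have : (fun y => gradient (fun z => ψ (z, t)) y) =ᶠ[𝓝 x]
        fun y => gradient (fun z => φ (z, t)) y := by
      filter_upwards [hx] with y hy
      simp only [gradient]
      rw [Filter.EventuallyEq.fderiv_eq hy]
    simp only [spaceLap, spaceHess]
    rw [this.fderiv_eq]
  have := hu.2 ψ hsm x t ht hloc
  rw [h1, h2] at this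
  exact ⟨_, this⟩

/-- The Laplacian of a function of the squared distance to a point. -/
theorem spaceLap_radial {d : ℕ} {φ : Euc d × ℝ → ℝ} {x₀ x : Euc d} {t : ℝ}
    {h h' : ℝ → ℝ} {h'' : ℝ} (hφ : ∀ᶠ y in 𝓝 x, φ (y, t) = h (‖y - x₀‖ ^ 2))
    (hh : ∀ᶠ s in 𝓝 (‖x - x₀‖ ^ 2), HasDerivAt h (h' s) s)
    (hh' : HasDerivAt h' h'' (‖x - x₀‖ ^ 2)) :
    spaceLap φ x t = 2 * d * h' (‖x - x₀‖ ^ 2) + 4 * ‖x - x₀‖ ^ 2 * h'' := by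
  have hcont : Tendsto (fun y : Euc d => ‖y - x₀‖ ^ 2) (𝓝 x) (𝓝 (‖x - x₀‖ ^ 2)) :=
    Continuous.tendsto (by fun_prop) x
  have hsq : ∀ y : Euc d, HasFDerivAt (fun z : Euc d => ‖z - x₀‖ ^ 2)
      (2 • innerSL ℝ (y - x₀)) y := fun y => by
    refine ((hasFDerivAt_id y).sub_const x₀).norm_sq.congr_fderiv ?_
    ext v
    simp
  have hgrad : (fun y => gradient (fun z => φ (z, t)) y) =ᶠ[𝓝 x]
      fun y => (2 * h' (‖y - x₀‖ ^ 2)) • (y - x₀) := by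
    filter_upwards [hφ.eventually_nhds, hcont.eventually hh] with y hy hy'
    have h1 : HasFDerivAt (fun z : Euc d => h (‖z - x₀‖ ^ 2))
        (h' (‖y - x₀‖ ^ 2) • (2 • innerSL ℝ (y - x₀))) y := hy'.comp_hasFDerivAt y (hsq y)
    have h2 : HasGradientAt (fun z => φ (z, t)) ((2 * h' (‖y - x₀‖ ^ 2)) • (y - x₀)) y := by
      rw [hasGradientAt_iff_hasFDerivAt]
      refine (h1.congr_of_eventuallyEq hy).congr_fderiv ?_
      ext v
      simp
      ring
    exact h2.gradient
  have hc : HasFDerivAt (fun y : Euc d => 2 * h' (‖y - x₀‖ ^ 2))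
      ((2 : ℝ) • (h'' • (2 • innerSL ℝ (x - x₀)))) x :=
    (hh'.comp_hasFDerivAt x (hsq x)).const_mul 2
  have hfull := hc.smul ((hasFDerivAt_id x).sub_const x₀)
  rw [spaceLap, spaceHess, hgrad.fderiv_eq, clTrace]
  erw [hfull.fderiv]
  have htr : ∀ (c : ℝ) (f : Euc d →L[ℝ] ℝ) (w : Euc d),
      LinearMap.trace ℝ (Euc d) ((c • ContinuousLinearMap.id ℝ (Euc d) + f.smulRight w :
        Euc d →L[ℝ] Euc d) : Euc d →ₗ[ℝ] Euc d) = c * d + f w := by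
    intro c f w
    have : ((c • ContinuousLinearMap.id ℝ (Euc d) + f.smulRight w :
        Euc d →L[ℝ] Euc d) : Euc d →ₗ[ℝ] Euc d)
        = c • LinearMap.id + (f : Euc d →ₗ[ℝ] ℝ).smulRight w := by
      ext v; simp
    rw [this, map_add, map_smul, LinearMap.trace_id, LinearMap.trace_smulRight]
    simp
  erw [htr]
  have hin : (inner ℝ (x - x₀) (x - x₀) : ℝ) = ‖x - x₀‖ ^ 2 := real_inner_self_eq_norm_sq _
  simp only [_root_.smul_apply, innerSL_apply_apply, id_eq, hin, smul_eq_mul,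
    nsmul_eq_mul, Nat.cast_ofNat]
  ring

/-- A one-dimensional profile `Q` with `Q' = √(2 G(Q))`, rising from the level `a` at `0` to
the level `b`, which it reaches after a finite length and keeps from then on. It satisfies
`Q'' ≥ G'(Q)` in the sense of second-order Taylor expansions from below. -/
theorem exists_profile {a b c : ℝ} (hab : a < b) {G G' : ℝ → ℝ}
    (hG : ∀ q, HasDerivAt G (G' q) q) (hGb : G b = 0) (hGb' : G' b < 0)
    (hc : 0 < c) (hlow : ∀ q ∈ Icc a b, c * (b - q) ≤ G q) :
    ∃ (Q : ℝ → ℝ) (l : ℝ), Continuous Q ∧ 0 < l ∧ l ≤ 2 / √(2 * c) * √(b - a) ∧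
      (∀ z ≤ 0, Q z ≤ a) ∧ (∀ z, 0 < z → a < Q z) ∧ (∀ z, Q z ≤ b) ∧ (∀ z, l ≤ z → Q z = b) ∧
      ∀ z, 0 < z → ∀ η, 0 < η → ∀ᶠ z' in 𝓝 z,
        Q z + √(2 * G (Q z)) * (z' - z) + (G' (Q z) - η) / 2 * (z' - z) ^ 2 ≤ Q z' := by
  have hGc : Continuous G := continuous_iff_continuousAt.2 fun q => (hG q).continuousAt
  have hGpos : ∀ q ∈ Ico a b, 0 < G q := fun q hq =>
    lt_of_lt_of_le (mul_pos hc (sub_pos.2 hq.2)) (hlow q ⟨hq.1, hq.2.le⟩)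
  classical
  set g : ℝ → ℝ := fun q => if q ∈ Ioo a b then (√(2 * G q))⁻¹ else 1 with hg
  have hgin : ∀ q ∈ Ioo a b, g q = (√(2 * G q))⁻¹ := fun q hq => if_pos hq
  have hgout : ∀ q, q ∉ Ioo a b → g q = 1 := fun q hq => if_neg hq
  have hgpos : ∀ q, 0 < g q := by
    intro q
    by_cases hq : q ∈ Ioo a b
    · rw [hgin q hq]
      have := hGpos q ⟨hq.1.le, hq.2⟩
      positivity
    · rw [hgout q hq]; exact one_pos
  have hgm : Measurable g :=
    Measurable.ite measurableSet_Ioo ((by fun_prop : Continuous fun q => √(2 * G q)).measurable.inv)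
      measurable_const
  have hgi : ∀ x y, IntervalIntegrable g volume x y := by
    intro x y
    have h1 : IntervalIntegrable (fun q : ℝ => (b - q) ^ (-(1 / 2) : ℝ)) volume x y := by
      have := (intervalIntegral.intervalIntegrable_rpow' (a := b - x) (b := b - y)
        (r := -(1 / 2)) (by norm_num)).comp_sub_left b
      simpa using this
    have h2 : IntervalIntegrable (fun q : ℝ => 1 + (√(2 * c))⁻¹ * ‖(b - q) ^ (-(1 / 2) : ℝ)‖)
        volume x y := intervalIntegrable_const.add (h1.norm.const_mul _)
    refine h2.mono_fun hgm.aestronglyMeasurable (Eventually.of_forall fun q => ?_)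
    simp only
    rw [Real.norm_of_nonneg (hgpos q).le, Real.norm_of_nonneg (by positivity)]
    by_cases hq : q ∈ Ioo a b
    · rw [hgin q hq]
      have hbq : 0 < b - q := sub_pos.2 hq.2
      have h3 : (b - q) ^ (-(1 / 2) : ℝ) = (√(b - q))⁻¹ := by
        rw [Real.rpow_neg hbq.le, Real.sqrt_eq_rpow]
      have h4 : (√(2 * G q))⁻¹ ≤ (√(2 * c))⁻¹ * (√(b - q))⁻¹ := by
        rw [← mul_inv, ← Real.sqrt_mul (by positivity), mul_assoc]
        have := hlow q ⟨hq.1.le, hq.2.le⟩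
        gcongr
      rw [h3, Real.norm_of_nonneg (by positivity)]
      linarith
    · rw [hgout q hq]
      have : 0 ≤ (√(2 * c))⁻¹ * ‖(b - q) ^ (-(1 / 2) : ℝ)‖ := by positivity
      linarith
  set T : ℝ → ℝ := fun q => ∫ s in a..q, g s with hT
  have hTc : Continuous T := intervalIntegral.continuous_primitive hgi a
  have hTsub : ∀ x y, T y - T x = ∫ s in x..y, g s := fun x y =>
    intervalIntegral.integral_interval_sub_left (hgi a y) (hgi a x)
  have hTmono : StrictMono T := fun x y hxy => by
    have := intervalIntegral.intervalIntegral_pos_of_pos (hgi x y) hgpos hxy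
    rw [← hTsub] at this
    linarith
  have hTa : T a = 0 := intervalIntegral.integral_same
  have hTone : ∀ x y, x ≤ y → (∀ q ∈ Icc x y, q ∉ Ioo a b) → T y - T x = y - x := by
    intro x y hxy h
    rw [hTsub, intervalIntegral.integral_congr (g := fun _ => (1 : ℝ))
      (fun q hq => hgout q (h q (uIcc_of_le hxy ▸ hq)))]
    simp
  have hTright : ∀ q, b ≤ q → T q = T b + (q - b) := fun q hq => by
    have := hTone b q hq fun s hs h => hs.1.not_gt h.2
    linarith
  have hTleft : ∀ q, q ≤ a → T q = q - a := fun q hq => by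
    have := hTone q a hq fun s hs h => hs.2.not_gt h.1
    linarith
  have hTsurj : Function.Surjective T := by
    refine hTc.surjective ?_ ?_
    · have : Tendsto (fun q : ℝ => T b + (q - b)) atTop atTop :=
        tendsto_atTop_add_const_left _ _ (tendsto_atTop_add_const_right _ _ tendsto_id)
      exact this.congr' (by
        filter_upwards [eventually_ge_atTop b] with q hq using (hTright q hq).symm)
    · have : Tendsto (fun q : ℝ => q - a) atBot atBot :=
        tendsto_atBot_add_const_right _ _ tendsto_id
      exact this.congr' (by
        filter_upwards [eventually_le_atBot a] with q hq using (hTleft q hq).symm)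
  have hTd : ∀ q ∈ Ioo a b, HasDerivAt T (√(2 * G q))⁻¹ q := by
    intro q hq
    rw [← hgin q hq]
    refine intervalIntegral.integral_hasDerivAt_right (hgi a q)
      hgm.stronglyMeasurable.stronglyMeasurableAtFilter ?_
    have h1 : ContinuousAt (fun q => (√(2 * G q))⁻¹) q := by
      refine ContinuousAt.inv₀ (by fun_prop) ?_
      have := hGpos q ⟨hq.1.le, hq.2⟩
      positivity
    exact h1.congr (by filter_upwards [isOpen_Ioo.mem_nhds hq] with s hs using (hgin s hs).symm)
  -- comparison of `T` with the primitive of an inverse square root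
  have hcmp : ∀ κ, 0 < κ → ∀ q ∈ Ioo a b, HasDerivAt (fun s => T s + 2 / √(2 * κ) * √(b - s))
      ((√(2 * G q))⁻¹ - (√(2 * (κ * (b - q))))⁻¹) q := by
    intro κ hκ q hq
    have hbq : 0 < b - q := sub_pos.2 hq.2
    have h1 : HasDerivAt (fun s => √(b - s)) (-1 / (2 * √(b - q))) q := by
      have := ((hasDerivAt_id q).const_sub b).sqrt hbq.ne'
      simpa using this
    refine ((hTd q hq).add (h1.const_mul (2 / √(2 * κ)))).congr_deriv ?_
    have h2 : √(2 * (κ * (b - q))) = √(2 * κ) * √(b - q) := by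
      rw [← mul_assoc, Real.sqrt_mul (by positivity)]
    rw [h2, sub_eq_add_neg]
    congr 1
    field_simp
  have hcont : ∀ κ, Continuous fun s => T s + 2 / √(2 * κ) * √(b - s) := fun κ => by fun_prop
  let e : ℝ ≃o ℝ := hTmono.orderIsoOfSurjective T hTsurj
  set q : ℝ → ℝ := fun z => e.symm z with hq
  have hqc : Continuous q := e.symm.continuous
  have hqmono : StrictMono q := e.symm.strictMono
  have hTq : ∀ z, T (q z) = z := fun z => e.apply_symm_apply z
  have hqT : ∀ s, q (T s) = s := fun s => e.symm_apply_apply s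
  have hq0 : q 0 = a := by rw [← hTa, hqT]
  have hql : q (T b) = b := hqT b
  have hl : 0 < T b := hTa ▸ hTmono hab
  refine ⟨fun z => min (q z) b, T b, hqc.min continuous_const, hl, ?_, ?_, ?_, ?_, ?_, ?_⟩
  · have hanti : AntitoneOn (fun s => T s + 2 / √(2 * c) * √(b - s)) (Icc a b) := by
      refine antitoneOn_of_deriv_nonpos (convex_Icc a b) (hcont c).continuousOn ?_ ?_
      · intro s hs
        rw [interior_Icc] at hs
        exact (hcmp c hc s hs).differentiableAt.differentiableWithinAt
      · intro s hs
        rw [interior_Icc] at hs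
        rw [(hcmp c hc s hs).deriv, sub_nonpos]
        have h1 := hlow s ⟨hs.1.le, hs.2.le⟩
        have h2 : 0 < b - s := sub_pos.2 hs.2
        gcongr
    have := hanti (left_mem_Icc.2 hab.le) (right_mem_Icc.2 hab.le) hab.le
    simpa [hTa] using this
  · intro z hz
    exact (min_le_left _ _).trans (hq0 ▸ hqmono.monotone hz)
  · intro z hz
    exact lt_min (hq0 ▸ hqmono hz) hab
  · intro z
    exact min_le_right _ _
  · intro z hz
    exact min_eq_right (hql ▸ hqmono.monotone hz)
  intro z hz η hη
  simp only
  rcases lt_or_ge z (T b) with hzl | hzl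
  · have hmem : ∀ᶠ y in 𝓝 z, y ∈ Ioo 0 (T b) := isOpen_Ioo.mem_nhds ⟨hz, hzl⟩
    have hrange : ∀ y ∈ Ioo 0 (T b), q y ∈ Ioo a b := fun y hy =>
      ⟨hq0 ▸ hqmono hy.1, hql ▸ hqmono hy.2⟩
    have hqd : ∀ y ∈ Ioo 0 (T b), HasDerivAt q (√(2 * G (q y))) y := by
      intro y hy
      have hr := hrange y hy
      have h1 := hGpos _ ⟨hr.1.le, hr.2⟩
      have := HasDerivAt.of_local_left_inverse (f := T) (g := q) hqc.continuousAt (hTd _ hr)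
        (by positivity) (Eventually.of_forall hTq)
      simpa using this
    have hzI : z ∈ Ioo 0 (T b) := ⟨hz, hzl⟩
    have hrz := hrange z hzI
    have hGz := hGpos _ ⟨hrz.1.le, hrz.2⟩
    set p := √(2 * G (q z)) with hp
    have hppos : 0 < p := by positivity
    set D : ℝ → ℝ := fun y => q y - (q z + p * (y - z) + (G' (q z) - η) / 2 * (y - z) ^ 2) with hD
    have hD1 : ∀ᶠ y in 𝓝 z, HasDerivAt D (√(2 * G (q y)) - p - (G' (q z) - η) * (y - z)) y := by
      filter_upwards [hmem] with y hy
      have h1 : HasDerivAt (fun y => y - z) 1 y := (hasDerivAt_id y).sub_const z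
      have h2 := (hqd y hy).sub (((h1.const_mul p).const_add (q z)).add
        ((h1.pow 2).const_mul ((G' (q z) - η) / 2)))
      refine h2.congr_deriv ?_
      simp
      ring
    have hD2 : HasDerivAt (deriv D) η z := by
      have h1 : HasDerivAt (fun y => y - z) 1 z := (hasDerivAt_id z).sub_const z
      have h3 : HasDerivAt (fun y => √(2 * G (q y)))
          ((2 * (G' (q z) * p)) / (2 * √(2 * G (q z)))) z :=
        (((hG (q z)).comp z (hqd z hzI)).const_mul 2).sqrt (by positivity)
      have h4 := (h3.sub_const p).sub (h1.const_mul (G' (q z) - η))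
      refine (h4.congr_of_eventuallyEq ?_).congr_deriv ?_
      · filter_upwards [hD1] with y hy using hy.deriv
      · rw [← hp]
        field_simp
        ring
    have hmin : IsLocalMin D z := by
      refine isLocalMin_of_deriv_deriv_pos (by rw [hD2.deriv]; exact hη) ?_
        hD1.self_of_nhds.continuousAt
      rw [hD1.self_of_nhds.deriv]
      simp [hp]
    filter_upwards [hmin, hmem] with y hy hyI
    rw [min_eq_left hrz.2.le, min_eq_left (hrange y hyI).2.le]
    have : D z = 0 := by simp [hD]
    rw [this] at hy
    simp only [hD] at hy
    linarith
  · have hqz : b ≤ q z := hql ▸ hqmono.monotone hzl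
    rw [min_eq_right hqz]
    set C := -G' b + η with hC
    have hCpos : 0 < C := by linarith
    have hnear : ∀ᶠ s in 𝓝[<] b, G s ≤ C * (b - s) := by
      have hd : HasDerivAt (fun s => G s - C * (b - s)) (G' b + C) b := by
        have := (hG b).sub (((hasDerivAt_id b).const_sub b).const_mul C)
        refine this.congr_deriv ?_
        ring
      have hev := eventually_nhdsWithin_sign_eq_of_deriv_pos (f := fun s => G s - C * (b - s))
        (x₀ := b) (by rw [hd.deriv]; linarith) (by simp [hGb])
      have hev' : ∀ᶠ s in 𝓝[<] b, SignType.sign (G s - C * (b - s)) = SignType.sign (s - b) :=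
        hev.filter_mono nhdsWithin_le_nhds
      filter_upwards [hev', self_mem_nhdsWithin] with s hs hsb
      rw [sign_neg (show s - b < 0 from sub_neg.2 hsb), sign_eq_neg_one_iff] at hs
      linarith
    obtain ⟨s₀, hs₀, hs₀'⟩ := (mem_nhdsLT_iff_exists_Ioo_subset' hab).1 hnear
    have hs₀b : s₀ < b := hs₀
    have hev : ∀ᶠ y in 𝓝 z, max a s₀ < q y :=
      hqc.continuousAt.eventually (lt_mem_nhds (lt_of_lt_of_le (max_lt hab hs₀b) hqz))
    filter_upwards [hev] with y hy
    rw [hGb, mul_zero, Real.sqrt_zero, zero_mul, add_zero,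
      show G' b - η = -C by rw [hC]; ring]
    rcases le_or_gt b (q y) with hby | hby
    · rw [min_eq_right hby]
      have : 0 ≤ C / 2 * (y - z) ^ 2 := by positivity
      linarith
    rw [min_eq_left hby.le]
    have hmono : MonotoneOn (fun s => T s + 2 / √(2 * C) * √(b - s)) (Icc (q y) b) := by
      have hsub : ∀ s ∈ Ioo (q y) b, s ∈ Ioo a b := fun s hs =>
        ⟨(le_max_left a s₀).trans_lt (hy.trans hs.1), hs.2⟩
      refine monotoneOn_of_deriv_nonneg (convex_Icc _ _) (hcont C).continuousOn ?_ ?_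
      · intro s hs
        rw [interior_Icc] at hs
        exact (hcmp C hCpos s (hsub s hs)).differentiableAt.differentiableWithinAt
      · intro s hs
        rw [interior_Icc] at hs
        rw [(hcmp C hCpos s (hsub s hs)).deriv, sub_nonneg]
        have h1 : G s ≤ C * (b - s) := hs₀' ⟨(le_max_right a s₀).trans_lt (hy.trans hs.1), hs.2⟩
        have h2 := hGpos s ⟨(hsub s hs).1.le, hs.2⟩
        gcongr
    have h1 := hmono (left_mem_Icc.2 hby.le) (right_mem_Icc.2 hby.le) hby.le
    simp only [hTq, sub_self, Real.sqrt_zero, mul_zero, add_zero] at h1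
    have h2 : 2 / √(2 * C) * √(b - q y) ≤ z - y := by linarith
    have h3 : (2 / √(2 * C) * √(b - q y)) ^ 2 ≤ (z - y) ^ 2 := by
      have : 0 ≤ 2 / √(2 * C) * √(b - q y) := by positivity
      gcongr
    rw [mul_pow, div_pow, Real.sq_sqrt (by positivity), Real.sq_sqrt (by linarith)] at h3
    have h4 : 2 ^ 2 / (2 * C) * (b - q y) = 2 * (b - q y) / C := by field_simp
    rw [h4, div_le_iff₀ hCpos] at h3
    nlinarith

/-- In a cylinder where a solution stays above `1 / 2`, it is `O(ε ^ 2)`-close to `1` at the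
centre. -/
theorem IsEpsSolution.one_sub_le_of_half_le {d : ℕ} {m : Euc d → Euc d → ℝ} {θ Θ : ℝ}
    (hθ : 0 < θ) (hm : ∀ y v, θ ≤ m y v ∧ m y v ≤ Θ) {W : ℝ → ℝ} {c : ℝ} (hc : 0 < c)
    (hWc : ∀ v ∈ Icc (1 / 2 : ℝ) 1, deriv W v ≤ -(c * (1 - v))) {ε : ℝ} (hε : 0 < ε)
    {u : Euc d × ℝ → ℝ} (hu : IsEpsSolution m W ε u) (huc : ContinuousOn u {p | 0 ≤ p.2})
    (hur : ∀ p : Euc d × ℝ, 0 ≤ p.2 → u p ∈ Icc (-1 : ℝ) 1) {y : Euc d} {t ρ τ : ℝ}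
    (hρ : 0 < ρ) (hτ : 0 < τ) (hτt : τ < t)
    (hhalf : ∀ x s, ‖x - y‖ ≤ ρ → |s - t| ≤ τ → 1 / 2 ≤ u (x, s)) :
    1 - (Θ / τ + d / ρ ^ 2) / c * ε ^ 2 ≤ u (y, t) := by
  have hΘ : 0 < Θ := hθ.trans_le ((hm 0 0).1.trans (hm 0 0).2)
  set A := (Θ / τ + d / ρ ^ 2) / c with hA
  have hA0 : 0 ≤ A := by positivity
  by_contra! hcon
  set φ : Euc d × ℝ → ℝ := fun p =>
    1 - (‖p.1 - y‖ ^ 2 / ρ ^ 2 + (p.2 - t) ^ 2 / τ ^ 2) / 2 - A * ε ^ 2 with hφ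
  have hφs : ContDiff ℝ (⊤ : ℕ∞) φ := by
    have : ContDiff ℝ (⊤ : ℕ∞) fun p : Euc d × ℝ => ‖p.1 - y‖ ^ 2 :=
      (contDiff_fst.sub contDiff_const).norm_sq ℝ
    fun_prop
  set K : Set (Euc d × ℝ) := Metric.closedBall y ρ ×ˢ Icc (t - τ) (t + τ) with hK
  have hKc : IsCompact K := (isCompact_closedBall y ρ).prod isCompact_Icc
  have hKpos : K ⊆ {p | 0 ≤ p.2} := fun p hp => by
    have : t - τ ≤ p.2 := hp.2.1
    change 0 ≤ p.2
    linarith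
  have hmemK : (y, t) ∈ K :=
    ⟨Metric.mem_closedBall_self hρ.le, by constructor <;> simp only <;> linarith⟩
  obtain ⟨⟨x, s⟩, hpK, hpmin⟩ := hKc.exists_isMinOn ⟨_, hmemK⟩
    ((huc.mono hKpos).sub hφs.continuous.continuousOn)
  have hneg : u (x, s) - φ (x, s) < 0 := by
    have h1 : u (x, s) - φ (x, s) ≤ u (y, t) - φ (y, t) := hpmin hmemK
    have h2 : φ (y, t) = 1 - A * ε ^ 2 := by simp [hφ]
    linarith
  have hxρ : ‖x - y‖ ≤ ρ := by simpa [dist_eq_norm] using hpK.1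
  have hsτ : |s - t| ≤ τ := by
    have h1 : t - τ ≤ s := hpK.2.1
    have h2 : s ≤ t + τ := hpK.2.2
    exact abs_le.2 ⟨by linarith, by linarith⟩
  have huhalf := hhalf x s hxρ hsτ
  have hu1 := (hur (x, s) (hKpos hpK)).2
  have hq1 : 0 ≤ ‖x - y‖ ^ 2 / ρ ^ 2 := by positivity
  have hq2 : 0 ≤ (s - t) ^ 2 / τ ^ 2 := by positivity
  have hAε : 0 ≤ A * ε ^ 2 := by positivity
  have hφx : φ (x, s) = 1 - (‖x - y‖ ^ 2 / ρ ^ 2 + (s - t) ^ 2 / τ ^ 2) / 2 - A * ε ^ 2 := rfl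
  have hxlt : ‖x - y‖ < ρ := by
    refine hxρ.lt_of_ne fun h => ?_
    rw [h, div_self (by positivity)] at hφx
    linarith
  have hslt : |s - t| < τ := by
    refine hsτ.lt_of_ne fun h => ?_
    rw [← sq_abs (s - t), h, div_self (by positivity)] at hφx
    linarith
  have hspos : 0 < s := by
    have := (abs_lt.1 hslt).1
    linarith
  have hnhds : K ∈ 𝓝 (x, s) := by
    refine prod_mem_nhds (Metric.closedBall_mem_nhds_of_mem ?_) (Icc_mem_nhds ?_ ?_)
    · simpa [dist_eq_norm] using hxlt
    · linarith [(abs_lt.1 hslt).1]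
    · linarith [(abs_lt.1 hslt).2]
  obtain ⟨v, hv⟩ := hu.supersolution_of_eventually_smooth hspos
    (Eventually.of_forall fun p => hφs.contDiffAt)
    (by filter_upwards [hnhds] with p hp using hpmin hp)
  have hlap : spaceLap φ x s = -(d / ρ ^ 2) := by
    rw [spaceLap_radial (x₀ := y)
      (h := fun r => 1 - (r / ρ ^ 2 + (s - t) ^ 2 / τ ^ 2) / 2 - A * ε ^ 2)
      (h' := fun _ => -(1 / ρ ^ 2 / 2)) (h'' := 0) (Eventually.of_forall fun z => rfl)
      (Eventually.of_forall fun r => ?_) (hasDerivAt_const _ _)]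
    · ring
    · exact ((((((hasDerivAt_id r).div_const (ρ ^ 2)).add_const _).div_const 2).const_sub
        1).sub_const _)
  have htd : timeDeriv φ x s = -((s - t) / τ ^ 2) := by
    have h1 := (hasDerivAt_id s).sub_const t
    have h2 := (((((h1.pow 2).div_const (τ ^ 2)).const_add (‖x - y‖ ^ 2 / ρ ^ 2)).div_const
      2).const_sub 1).sub_const (A * ε ^ 2)
    rw [timeDeriv]
    refine h2.deriv.trans ?_
    simp
    ring
  rw [hlap, htd] at hv
  have hmv := hm (ε⁻¹ • x) v
  have h1 : m (ε⁻¹ • x) v * -((s - t) / τ ^ 2) ≤ Θ / τ := by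
    have h2 : -((s - t) / τ ^ 2) ≤ 1 / τ := by
      rw [← neg_div, div_le_div_iff₀ (by positivity) hτ]
      nlinarith [(abs_lt.1 hslt).1]
    calc _ ≤ m (ε⁻¹ • x) v * (1 / τ) :=
          mul_le_mul_of_nonneg_left h2 (hθ.le.trans hmv.1)
      _ ≤ Θ * (1 / τ) := mul_le_mul_of_nonneg_right hmv.2 (by positivity)
      _ = Θ / τ := by ring
  have h3 : deriv W (u (x, s)) < -(c * (A * ε ^ 2)) := by
    have h4 := hWc _ ⟨huhalf, hu1⟩
    have h5 : A * ε ^ 2 < 1 - u (x, s) := by linarith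
    have := mul_lt_mul_of_pos_left h5 hc
    linarith
  have h6 : ε⁻¹ ^ 2 * deriv W (u (x, s)) < ε⁻¹ ^ 2 * -(c * (A * ε ^ 2)) :=
    mul_lt_mul_of_pos_left h3 (by positivity)
  have h7 : ε⁻¹ ^ 2 * -(c * (A * ε ^ 2)) = -(Θ / τ + d / ρ ^ 2) := by
    rw [hA]
    field_simp
  linarith

theorem spaceLap_profile {d : ℕ} {x₀ x : Euc d} {t ε q P C : ℝ} {r a : ℝ → ℝ} (hε : 0 < ε)
    (hρpos : 0 < ‖x - x₀‖) :
    spaceLap (fun p : Euc d × ℝ => q + P * ((r p.2 - ‖p.1 - x₀‖) / ε - (r t - ‖x - x₀‖) / ε)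
      + C / 2 * ((r p.2 - ‖p.1 - x₀‖) / ε - (r t - ‖x - x₀‖) / ε) ^ 2 - a p.2) x t
      = C / ε ^ 2 - (d - 1) / ‖x - x₀‖ * P / ε := by
  set ρ := ‖x - x₀‖ with hρ
  set z := (r t - ρ) / ε with hz
  have hsq : √(ρ ^ 2) = ρ := Real.sqrt_sq hρpos.le
  have hβ : ∀ s, 0 < s → HasDerivAt (fun s => (r t - √s) / ε - z) (-(1 / (2 * √s)) / ε) s :=
    fun s hs => (((Real.hasDerivAt_sqrt hs.ne').const_sub (r t)).div_const ε).sub_const z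
  have hβ' : HasDerivAt (fun s => -(1 / (2 * √s)) / ε) (1 / (4 * ρ ^ 3) / ε) (ρ ^ 2) := by
    have h1 : HasDerivAt (fun s : ℝ => 1 / (2 * √s)) _ (ρ ^ 2) :=
      (hasDerivAt_const (ρ ^ 2) (1 : ℝ)).div
        ((Real.hasDerivAt_sqrt (by positivity)).const_mul 2) (by rw [hsq]; positivity)
    refine (h1.neg.div_const ε).congr_deriv ?_
    rw [hsq]
    field_simp
    ring
  have h0 : (r t - √(ρ ^ 2)) / ε - z = 0 := by rw [hsq, hz]; simp
  have hpos : (0 : ℝ) < ρ ^ 2 := by positivity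
  rw [spaceLap_radial (x₀ := x₀)
    (h := fun s => q + P * ((r t - √s) / ε - z) + C / 2 * ((r t - √s) / ε - z) ^ 2 - a t)
    (h' := fun s => (P + C * ((r t - √s) / ε - z)) * (-(1 / (2 * √s)) / ε))
    (h'' := (C * (-(1 / (2 * ρ)) / ε)) * (-(1 / (2 * ρ)) / ε) + P * (1 / (4 * ρ ^ 3) / ε))]
  · rw [← hρ, h0, hsq]
    field_simp
    ring
  · exact Eventually.of_forall fun y => by simp [Real.sqrt_sq (norm_nonneg _)]
  · filter_upwards [lt_mem_nhds hpos] with s hs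
    have h1 := hβ s hs
    have h2 := ((((h1.const_mul P).const_add q).add
      ((h1.pow 2).const_mul (C / 2)))).sub_const (a t)
    refine h2.congr_deriv ?_
    simp
    ring
  · have h1 := hβ _ hpos
    have h2 := ((h1.const_mul C).const_add P).mul hβ'
    refine h2.congr_deriv ?_
    rw [h0, hsq]
    simp

theorem timeDeriv_profile {d : ℕ} {x₀ x : Euc d} {t ε q P C r' a' : ℝ} {r a : ℝ → ℝ}
    (hr : HasDerivAt r r' t) (ha : HasDerivAt a a' t) :
    timeDeriv (fun p : Euc d × ℝ => q + P * ((r p.2 - ‖p.1 - x₀‖) / ε - (r t - ‖x - x₀‖) / ε)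
      + C / 2 * ((r p.2 - ‖p.1 - x₀‖) / ε - (r t - ‖x - x₀‖) / ε) ^ 2 - a p.2) x t
      = P * (r' / ε) - a' := by
  have h1 : HasDerivAt (fun s => (r s - ‖x - x₀‖) / ε - (r t - ‖x - x₀‖) / ε) (r' / ε) t :=
    ((hr.sub_const _).div_const ε).sub_const _
  have h2 := (((h1.const_mul P).const_add q).add ((h1.pow 2).const_mul (C / 2))).sub ha
  refine h2.deriv.trans ?_
  simp

/-- If `u` drops below `v` somewhere, then `v`, lowered by a function of time growing at rate
more than `k` and blowing up at the final time, touches `u` from below. -/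
theorem exists_touching {d : ℕ} {u v : Euc d × ℝ → ℝ} {B : Set (Euc d)} (hB : IsCompact B)
    {t₁ T k : ℝ} (hc : ContinuousOn (fun p => u p - v p) (B ×ˢ Icc t₁ T))
    (hbd : ∀ p ∈ B ×ˢ Icc t₁ T, u p < v p → t₁ < p.2 ∧ B ∈ 𝓝 p.1)
    {x' : Euc d} {t' : ℝ} (hx' : x' ∈ B) (ht₁' : t₁ ≤ t') (htT' : t' < T)
    (hcon : u (x', t') < v (x', t')) :
    ∃ (x : Euc d) (t : ℝ) (a : ℝ → ℝ), t₁ < t ∧ t < T ∧ 0 < a t ∧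
      u (x, t) = v (x, t) - a t ∧ HasDerivAt a (k * a t + a t / (T - t)) t ∧
      (∀ᶠ p : Euc d × ℝ in 𝓝 (x, t), ContDiffAt ℝ (⊤ : ℕ∞) (fun p => a p.2) p) ∧
      ∀ᶠ p : Euc d × ℝ in 𝓝 (x, t), v p - a p.2 ≤ u p := by
  have hFc : ContinuousOn
      (fun p : Euc d × ℝ => (u p - v p) * (Real.exp (-(k * p.2)) * (T - p.2)))
      (B ×ˢ Icc t₁ T) := hc.mul (by fun_prop)
  obtain ⟨F, hF⟩ : ∃ F : Euc d × ℝ → ℝ,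
      ∀ p, F p = (u p - v p) * (Real.exp (-(k * p.2)) * (T - p.2)) := ⟨_, fun p => rfl⟩
  have hFc : ContinuousOn F (B ×ˢ Icc t₁ T) := hFc.congr fun p _ => hF p
  have hmem' : (x', t') ∈ B ×ˢ Icc t₁ T := ⟨hx', ht₁', htT'.le⟩
  obtain ⟨⟨x, t⟩, hpK, hpmin⟩ := (hB.prod isCompact_Icc).exists_isMinOn ⟨_, hmem'⟩ hFc
  have hFneg : F (x, t) < 0 := by
    refine (hpmin hmem').trans_lt ?_
    rw [hF]
    exact mul_neg_of_neg_of_pos (sub_neg.2 hcon) (mul_pos (Real.exp_pos _) (sub_pos.2 htT'))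
  have htT : t < T := by
    refine lt_of_le_of_ne hpK.2.2 fun h => ?_
    have h : t = T := h
    simp [hF, h] at hFneg
  have hTt : 0 < T - t := sub_pos.2 htT
  have huv : u (x, t) < v (x, t) := by
    by_contra! h
    refine hFneg.not_ge ?_
    rw [hF]
    exact mul_nonneg (sub_nonneg.2 h) (mul_pos (Real.exp_pos _) hTt).le
  obtain ⟨ht₁t, hBx⟩ := hbd _ hpK huv
  have hnhds : B ×ˢ Icc t₁ T ∈ 𝓝 (x, t) := prod_mem_nhds hBx (Icc_mem_nhds ht₁t htT)
  obtain ⟨lam, hlam⟩ : ∃ lam, lam = -F (x, t) := ⟨_, rfl⟩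
  have hlampos : 0 < lam := hlam ▸ neg_pos.2 hFneg
  obtain ⟨a, ha⟩ : ∃ a : ℝ → ℝ, a = fun s => lam * Real.exp (k * s) / (T - s) := ⟨_, rfl⟩
  have hapos : ∀ s < T, 0 < a s := fun s hs => by
    have : 0 < T - s := sub_pos.2 hs
    rw [ha]
    positivity
  have had : HasDerivAt a (k * a t + a t / (T - t)) t := by
    have h1 : HasDerivAt (fun s => lam * Real.exp (k * s)) (lam * (Real.exp (k * t) * k)) t := by
      have := (((hasDerivAt_id t).const_mul k).exp).const_mul lam
      simpa using this
    rw [ha]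
    refine (h1.div ((hasDerivAt_id t).const_sub T) hTt.ne').congr_deriv ?_
    simp only [id]
    field_simp
    ring
  have hFa : ∀ p : Euc d × ℝ, p.2 < T → u p - v p = F p / lam * a p.2 := by
    intro p hp
    have h1 : 0 < T - p.2 := sub_pos.2 hp
    rw [hF, ha, Real.exp_neg]
    field_simp
  have hTnhds : ∀ᶠ p : Euc d × ℝ in 𝓝 (x, t), p.2 < T :=
    continuous_snd.continuousAt.eventually_lt continuousAt_const htT
  refine ⟨x, t, a, ht₁t, htT, hapos t htT, ?_, had, ?_, ?_⟩
  · have h1 := hFa (x, t) htT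
    have h2 : F (x, t) / lam = -1 := by
      rw [div_eq_iff hlampos.ne', hlam]
      ring
    rw [h2] at h1
    simp only at h1
    linarith
  · filter_upwards [hTnhds] with p hp
    have h1 : T - p.2 ≠ 0 := (sub_pos.2 hp).ne'
    rw [ha]
    exact ContDiffAt.div (by fun_prop) (by fun_prop) h1
  · filter_upwards [hnhds, hTnhds] with p hp hpT
    have h1 := hFa p hpT
    have h2 : -1 ≤ F p / lam := by
      rw [le_div_iff₀ hlampos, hlam]
      have : F (x, t) ≤ F p := hpmin hp
      linarith
    have := mul_le_mul_of_nonneg_right h2 (hapos _ hpT).le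
    linarith

/-- A constant lowered by a function of time growing fast enough cannot touch a solution from
below where the reaction term is nonpositive. -/
theorem IsEpsSolution.not_touching_const {d : ℕ} {m : Euc d → Euc d → ℝ} {θ : ℝ} (hθ : 0 < θ)
    (hm : ∀ y v, θ ≤ m y v) {W : ℝ → ℝ} {ε : ℝ}
    {u : Euc d × ℝ → ℝ} (hu : IsEpsSolution m W ε u) {b R a' : ℝ} {a : ℝ → ℝ}
    {x : Euc d} {t : ℝ} (ht : 0 < t) (had : HasDerivAt a a' t)
    (has : ∀ᶠ p : Euc d × ℝ in 𝓝 (x, t), ContDiffAt ℝ (⊤ : ℕ∞) (fun p => a p.2) p)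
    (hua : u (x, t) = b - a t) (hge : ∀ᶠ p : Euc d × ℝ in 𝓝 (x, t), b - a p.2 ≤ u p)
    (hR : ε⁻¹ ^ 2 * deriv W (u (x, t)) ≤ R) (hR0 : 0 ≤ R) : θ * a' ≤ R := by
  by_contra! hlt
  obtain ⟨w, hw⟩ := hu.supersolution_of_eventually_smooth (φ := fun p => b - a p.2) ht
    (by filter_upwards [has] with p hp using contDiffAt_const.sub hp)
    (by
      filter_upwards [hge] with p hp
      rw [hua]
      linarith)
  have hlap : spaceLap (fun p : Euc d × ℝ => b - a p.2) x t = 0 := by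
    rw [spaceLap_radial (x₀ := x) (h := fun _ => b - a t) (h' := fun _ => 0) (h'' := 0)
      (Eventually.of_forall fun z => rfl) (Eventually.of_forall fun r => hasDerivAt_const _ _)
      (hasDerivAt_const _ _)]
    ring
  have htd : timeDeriv (fun p : Euc d × ℝ => b - a p.2) x t = -a' := (had.const_sub b).deriv
  rw [hlap, htd] at hw
  have ha' : 0 < a' := pos_of_mul_pos_right (hR0.trans_lt hlt) hθ.le
  have h1 := mul_le_mul_of_nonneg_right (hm (ε⁻¹ • x) w) ha'.le
  linarith

/-- The inequality satisfied by a radial quadratic profile, lowered by a function of time, which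
touches a solution from below. -/
theorem IsEpsSolution.touching_profile {d : ℕ} {m : Euc d → Euc d → ℝ} {θ : ℝ}
    (hm : ∀ y v, θ ≤ m y v) {W : ℝ → ℝ} {ε : ℝ} (hε : 0 < ε)
    {u : Euc d × ℝ → ℝ} (hu : IsEpsSolution m W ε u) {q P C r' a' : ℝ} {a r : ℝ → ℝ}
    {x x₀ : Euc d} {t : ℝ} (ht : 0 < t) (hx : 0 < ‖x - x₀‖) (had : HasDerivAt a a' t)
    (has : ∀ᶠ p : Euc d × ℝ in 𝓝 (x, t), ContDiffAt ℝ (⊤ : ℕ∞) (fun p => a p.2) p)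
    (hrd : HasDerivAt r r' t)
    (hrs : ∀ᶠ p : Euc d × ℝ in 𝓝 (x, t), ContDiffAt ℝ (⊤ : ℕ∞) (fun p => r p.2) p)
    (hua : u (x, t) = q - a t)
    (hge : ∀ᶠ p : Euc d × ℝ in 𝓝 (x, t),
      q + P * ((r p.2 - ‖p.1 - x₀‖) / ε - (r t - ‖x - x₀‖) / ε)
      + C / 2 * ((r p.2 - ‖p.1 - x₀‖) / ε - (r t - ‖x - x₀‖) / ε) ^ 2 - a p.2 ≤ u p)
    (hP : 0 ≤ P) (hr' : r' ≤ 0) (ha' : 0 ≤ a') :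
    C / ε ^ 2 - (d - 1) / ‖x - x₀‖ * P / ε ≤
      θ * (P * (r' / ε) - a') + ε⁻¹ ^ 2 * deriv W (u (x, t)) := by
  have hx0 : x ≠ x₀ := fun h => by simp [h] at hx
  have hxnhds : ∀ᶠ p : Euc d × ℝ in 𝓝 (x, t), p.1 ≠ x₀ :=
    continuous_fst.continuousAt.eventually_ne hx0
  obtain ⟨w, hw⟩ := hu.supersolution_of_eventually_smooth
    (φ := fun p => q + P * ((r p.2 - ‖p.1 - x₀‖) / ε - (r t - ‖x - x₀‖) / ε)
      + C / 2 * ((r p.2 - ‖p.1 - x₀‖) / ε - (r t - ‖x - x₀‖) / ε) ^ 2 - a p.2) ht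
    (by
      filter_upwards [has, hxnhds, hrs] with p hp hpx h1
      have h2 : ContDiffAt ℝ (⊤ : ℕ∞) (fun p : Euc d × ℝ => ‖p.1 - x₀‖) p :=
        ContDiffAt.norm ℝ (by fun_prop) (sub_ne_zero.2 hpx)
      have h3 := ((h1.sub h2).div_const ε).sub
        (contDiffAt_const (c := (r t - ‖x - x₀‖) / ε))
      exact ((contDiffAt_const.add (contDiffAt_const.mul h3)).add
        (contDiffAt_const.mul (h3.pow 2))).sub hp)
    (by
      filter_upwards [hge] with p hp
      rw [hua]
      simp only [sub_self, mul_zero, add_zero, ne_eq, OfNat.ofNat_ne_zero, not_false_eq_true,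
        zero_pow]
      linarith)
  rw [timeDeriv_profile hrd had, spaceLap_profile hε hx] at hw
  have hD : P * (r' / ε) - a' ≤ 0 := by
    have h1 : r' / ε ≤ 0 := div_nonpos_of_nonpos_of_nonneg hr' hε.le
    have := mul_nonpos_of_nonneg_of_nonpos hP h1
    linarith
  have h1 := mul_le_mul_of_nonpos_right (hm (ε⁻¹ • x) w) hD
  linarith

/-- A profile travelling along a ball shrinking faster than by curvature stays below a
solution lying above it initially. -/
theorem IsEpsSolution.barrier_le {d : ℕ} {m : Euc d → Euc d → ℝ} {θ : ℝ} (hθ : 0 < θ)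
    (hm : ∀ y v, θ ≤ m y v) {W : ℝ → ℝ} {L : ℝ} (hL0 : 0 ≤ L)
    (hL : ∀ v ∈ Icc (-1 : ℝ) 1, ∀ w ∈ Icc (-1 : ℝ) 1, v ≤ w →
      deriv W v ≤ deriv W w + L * (w - v))
    {ε : ℝ} (hε : 0 < ε) {u : Euc d × ℝ → ℝ} (hu : IsEpsSolution m W ε u)
    (huc : ContinuousOn u {p | 0 ≤ p.2})
    (hur : ∀ p : Euc d × ℝ, 0 ≤ p.2 → u p ∈ Icc (-1 : ℝ) 1)
    {b l κ : ℝ} {G G' Q : ℝ → ℝ} (hb : b ≤ 1) (hWb : deriv W b ≤ 0)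
    (hQc : Continuous Q) (hQ0 : ∀ z ≤ 0, Q z ≤ -1) (hQpos : ∀ z, 0 < z → -1 < Q z)
    (hQb : ∀ z, Q z ≤ b) (hQl : ∀ z, l ≤ z → Q z = b)
    (hQt : ∀ z, 0 < z → ∀ η, 0 < η → ∀ᶠ z' in 𝓝 z,
      Q z + √(2 * G (Q z)) * (z' - z) + (G' (Q z) - η) / 2 * (z' - z) ^ 2 ≤ Q z')
    (hG : ∀ q ∈ Ioc (-1) b, deriv W q - κ * ε * √(2 * G q) ≤ G' q)
    {x₀ : Euc d} {t₁ T Λ ρ₀ : ℝ} (ht₁ : 0 < t₁) (hΛ : 0 ≤ Λ) (hρ₀ : 0 ≤ ρ₀)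
    (hT : 0 < ρ₀ ^ 2 - Λ * (T - t₁))
    (hgeom : ∀ t ∈ Icc t₁ T, ∀ ρ, √(ρ₀ ^ 2 - Λ * (t - t₁)) - ε * l ≤ ρ →
      0 < ρ ∧ (d - 1) / ρ - θ * (Λ / (2 * √(ρ₀ ^ 2 - Λ * (t - t₁)))) ≤ -κ)
    (hinit : ∀ x, ‖x - x₀‖ ≤ ρ₀ → b ≤ u (x, t₁)) :
    ∀ x t, t₁ ≤ t → t < T → Q ((√(ρ₀ ^ 2 - Λ * (t - t₁)) - ‖x - x₀‖) / ε) ≤ u (x, t) := by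
  have hrpos : ∀ t ≤ T, 0 < ρ₀ ^ 2 - Λ * (t - t₁) := fun t ht => by
    have := mul_le_mul_of_nonneg_left ht hΛ
    linarith
  obtain ⟨r, hr⟩ : ∃ r : ℝ → ℝ, ∀ t, r t = √(ρ₀ ^ 2 - Λ * (t - t₁)) := ⟨_, fun t => rfl⟩
  simp only [← hr] at hgeom ⊢
  have hrc : Continuous r := by
    rw [funext hr]
    fun_prop
  have hrle : ∀ t, t₁ ≤ t → r t ≤ ρ₀ := fun t ht => by
    rw [hr]
    refine Real.sqrt_le_iff.2 ⟨hρ₀, ?_⟩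
    have := mul_nonneg hΛ (sub_nonneg.2 ht)
    linarith
  have hrd : ∀ t ≤ T, HasDerivAt r (-(Λ / (2 * r t))) t := fun t ht => by
    have h1 := (((hasDerivAt_id t).sub_const t₁).const_mul Λ).const_sub (ρ₀ ^ 2)
    rw [hr, funext hr]
    refine (h1.sqrt (hrpos t ht).ne').congr_deriv ?_
    simp only [id]
    ring
  have hvc : Continuous fun p : Euc d × ℝ => Q ((r p.2 - ‖p.1 - x₀‖) / ε) := by fun_prop
  -- where the barrier is violated, the profile is evaluated at a positive argument
  have hzpos : ∀ p : Euc d × ℝ, 0 ≤ p.2 → u p < Q ((r p.2 - ‖p.1 - x₀‖) / ε) →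
      ‖p.1 - x₀‖ < r p.2 := by
    intro p hp hlt
    by_contra! h
    have h1 := hQ0 _ (div_nonpos_of_nonpos_of_nonneg (sub_nonpos.2 h) hε.le)
    have := (hur p hp).1
    linarith
  intro x' t' ht₁' htT'
  by_contra! hcon
  obtain ⟨k, hk⟩ : ∃ k, k = ε⁻¹ ^ 2 * L / θ := ⟨_, rfl⟩
  have hk0 : 0 ≤ k := by rw [hk]; positivity
  have hkθ : θ * k = ε⁻¹ ^ 2 * L := by
    rw [hk]
    field_simp
  have hBpos : Metric.closedBall x₀ ρ₀ ×ˢ Icc t₁ T ⊆ {p : Euc d × ℝ | 0 ≤ p.2} :=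
    fun p hp => ht₁.le.trans hp.2.1
  have hbd : ∀ p ∈ Metric.closedBall x₀ ρ₀ ×ˢ Icc t₁ T,
      u p < Q ((r p.2 - ‖p.1 - x₀‖) / ε) → t₁ < p.2 ∧ Metric.closedBall x₀ ρ₀ ∈ 𝓝 p.1 := by
    rintro ⟨y, s⟩ hp hlt
    have h1 : ‖y - x₀‖ < r s := hzpos (y, s) (hBpos hp) hlt
    have h2 : r s ≤ ρ₀ := hrle s hp.2.1
    refine ⟨lt_of_le_of_ne hp.2.1 ?_, Metric.closedBall_mem_nhds_of_mem ?_⟩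
    · rintro rfl
      exact hlt.not_ge ((hQb _).trans (hinit y (h1.le.trans h2)))
    · simpa [dist_eq_norm] using h1.trans_le h2
  have hx' : x' ∈ Metric.closedBall x₀ ρ₀ := by
    have h1 := (hzpos (x', t') (ht₁.le.trans ht₁') hcon).le.trans (hrle _ ht₁')
    simpa [dist_eq_norm] using h1
  have hdiff : ContinuousOn (fun p : Euc d × ℝ => u p - Q ((r p.2 - ‖p.1 - x₀‖) / ε))
      (Metric.closedBall x₀ ρ₀ ×ˢ Icc t₁ T) := (huc.mono hBpos).sub hvc.continuousOn
  obtain ⟨x, t, a, ht₁t, htT, hapos, hua, had, has, hge⟩ := exists_touching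
    (v := fun p => Q ((r p.2 - ‖p.1 - x₀‖) / ε)) (k := k)
    (isCompact_closedBall x₀ ρ₀) hdiff hbd hx' ht₁' htT' hcon
  have hTt : 0 < T - t := sub_pos.2 htT
  have ht0 : 0 < t := ht₁.trans ht₁t
  simp only at hua hge
  have hxr : ‖x - x₀‖ < r t := hzpos (x, t) ht0.le (by simp only; linarith)
  obtain ⟨z, hz⟩ : ∃ z, z = (r t - ‖x - x₀‖) / ε := ⟨_, rfl⟩
  have hz0 : 0 < z := hz ▸ div_pos (sub_pos.2 hxr) hε
  rw [← hz] at hua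
  have hWu : ε⁻¹ ^ 2 * deriv W (u (x, t)) ≤ ε⁻¹ ^ 2 * (deriv W (Q z) + L * a t) := by
    have h1 := hL _ (hur (x, t) ht0.le) (Q z) ⟨(hQpos z hz0).le, (hQb z).trans hb⟩
      (by linarith)
    have h2 : Q z - u (x, t) = a t := by rw [hua]; ring
    rw [h2] at h1
    exact mul_le_mul_of_nonneg_left h1 (by positivity)
  have hgain : 0 < θ * (a t / (T - t)) := by positivity
  have hkθ' : θ * (k * a t) = ε⁻¹ ^ 2 * (L * a t) := by rw [← mul_assoc, hkθ]; ring
  have hcontz : ContinuousAt (fun p : Euc d × ℝ => (r p.2 - ‖p.1 - x₀‖) / ε) (x, t) := by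
    fun_prop
  have hcontz : Tendsto (fun p : Euc d × ℝ => (r p.2 - ‖p.1 - x₀‖) / ε) (𝓝 (x, t)) (𝓝 z) := by
    rw [hz]
    exact hcontz
  rcases lt_or_ge l z with hlz | hlz
  · rw [hQl z hlz.le] at hua hWu
    have h1 : 0 ≤ ε⁻¹ ^ 2 * (L * a t) := by positivity
    have h2 : ε⁻¹ ^ 2 * deriv W b ≤ 0 := mul_nonpos_of_nonneg_of_nonpos (by positivity) hWb
    have h3 := hu.not_touching_const (R := ε⁻¹ ^ 2 * (L * a t)) hθ hm ht0 had has hua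
      (by
        filter_upwards [hge, hcontz.eventually_const_lt hlz] with p hp hpl
        rwa [hQl _ hpl.le] at hp)
      (by linarith) h1
    linarith
  · have hrt : 0 < r t := (norm_nonneg _).trans_lt hxr
    obtain ⟨hρpos, hcurv⟩ := hgeom t ⟨ht₁t.le, htT.le⟩ ‖x - x₀‖ (by
      rw [hz, div_le_iff₀ hε] at hlz
      linarith)
    obtain ⟨P, hP⟩ : ∃ P, P = √(2 * G (Q z)) := ⟨_, rfl⟩
    have hP0 : 0 ≤ P := hP ▸ Real.sqrt_nonneg _
    obtain ⟨η, hη⟩ : ∃ η, η = ε ^ 2 * (θ * (a t / (T - t))) / 2 := ⟨_, rfl⟩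
    have hηpos : 0 < η := by rw [hη]; positivity
    have hQt' := hcontz.eventually (hQt z hz0 η hηpos)
    have hGz := hG (Q z) ⟨hQpos z hz0, hQb z⟩
    rw [← hP] at hQt' hGz
    have hw := hu.touching_profile (P := P) (C := G' (Q z) - η) hm hε ht0 hρpos had has
      (hrd t htT.le)
      (by
        filter_upwards [continuous_snd.continuousAt.eventually_lt continuousAt_const htT]
          with p hpT
        rw [funext hr]
        exact ContDiffAt.sqrt (by fun_prop) (hrpos _ hpT.le).ne')
      hua
      (by
        filter_upwards [hge, hQt'] with p hp hpl
        rw [← hz]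
        linarith)
      hP0 (neg_nonpos.2 (by positivity)) (by positivity)
    have h2 := mul_le_mul_of_nonneg_left hGz (by positivity : 0 ≤ ε⁻¹ ^ 2)
    have h3 := mul_le_mul_of_nonneg_left hcurv (by positivity : 0 ≤ P / ε)
    have h4 : θ * (P * (-(Λ / (2 * r t)) / ε) - (k * a t + a t / (T - t)))
        = -(P / ε * (θ * (Λ / (2 * r t)))) - ε⁻¹ ^ 2 * (L * a t) - θ * (a t / (T - t)) := by
      rw [← hkθ']
      ring
    have h5 : (G' (Q z) - η) / ε ^ 2 = ε⁻¹ ^ 2 * G' (Q z) - θ * (a t / (T - t)) / 2 := by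
      rw [hη]
      field_simp
    have h6 : ε⁻¹ ^ 2 * (κ * ε * P) = P / ε * κ := by field_simp
    have h7 : (d - 1) / ‖x - x₀‖ * P / ε = P / ε * ((d - 1) / ‖x - x₀‖) := by ring
    rw [h4, h5, h7] at hw
    linarith

theorem DoubleWell.antitoneOn {W : ℝ → ℝ} (hW : DoubleWell W) : AntitoneOn W (Icc 0 1) := by
  obtain ⟨hC, -, -, -, -, -, -, -, -, hneg, -⟩ := hW
  refine antitoneOn_of_deriv_nonpos (convex_Icc 0 1) hC.continuous.continuousOn
    (hC.differentiable (by norm_num)).differentiableOn fun x hx => ?_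
  rw [interior_Icc] at hx
  exact (hneg x hx).le

theorem DoubleWell.exists_deriv_le {W : ℝ → ℝ} (hW : DoubleWell W) :
    ∃ c, 0 < c ∧ ∀ v ∈ Icc (1 / 2 : ℝ) 1, deriv W v ≤ -(c * (1 - v)) := by
  obtain ⟨hC, -, -, -, -, -, -, h1, -, hneg, -, h1', -⟩ := hW
  have hd : ContDiff ℝ 2 (deriv W) := ((contDiff_succ_iff_deriv (n := 2)).1 hC).2.2
  have hdd : Differentiable ℝ (deriv W) := hd.differentiable (by norm_num)
  have hcont : Continuous (dslope (deriv W) 1) := by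
    rw [continuous_iff_continuousAt]
    intro x
    rcases eq_or_ne x 1 with rfl | hx
    · exact continuousAt_dslope_same.2 (hdd 1)
    · exact (continuousAt_dslope_of_ne hx).2 (hdd x).continuousAt
  obtain ⟨v₀, hv₀, hmin⟩ := (isCompact_Icc (a := (1 / 2 : ℝ)) (b := 1)).exists_isMinOn
    ⟨1, by norm_num⟩ hcont.continuousOn
  refine ⟨dslope (deriv W) 1 v₀, ?_, fun v hv => ?_⟩
  · rcases eq_or_ne v₀ 1 with rfl | hx
    · rwa [dslope_same]
    · have hlt : v₀ < 1 := lt_of_le_of_ne hv₀.2 hx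
      rw [dslope_of_ne _ hx, slope_def_field, h1, sub_zero]
      exact div_pos_of_neg_of_neg (hneg v₀ ⟨by linarith [hv₀.1], hlt⟩) (sub_neg.2 hlt)
  · have h2 : (v - 1) * dslope (deriv W) 1 v = deriv W v := by
      have := sub_smul_dslope (deriv W) 1 v
      rwa [h1, sub_zero, smul_eq_mul] at this
    have h3 : dslope (deriv W) 1 v₀ ≤ dslope (deriv W) 1 v := hmin hv
    have := mul_le_mul_of_nonneg_left h3 (sub_nonneg.2 hv.2)
    linarith

theorem exists_sub_le_of_contDiff {f : ℝ → ℝ} (hf : ContDiff ℝ 1 f) :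
    ∃ L, 0 ≤ L ∧ ∀ v ∈ Icc (-1 : ℝ) 1, ∀ w ∈ Icc (-1 : ℝ) 1, v ≤ w →
      f v ≤ f w + L * (w - v) := by
  obtain ⟨L, hL⟩ := (isCompact_Icc (a := (-1 : ℝ)) (b := 1)).exists_bound_of_continuousOn
    (hf.continuous_deriv le_rfl).continuousOn
  refine ⟨L, (norm_nonneg _).trans (hL 0 (by norm_num)), fun v hv w hw hvw => ?_⟩
  have h := (convex_Icc (-1 : ℝ) 1).norm_image_sub_le_of_norm_deriv_le
    (fun x _ => (hf.differentiable one_ne_zero) x) hL hw hv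
  rw [Real.norm_eq_abs, Real.norm_eq_abs, abs_of_nonpos (sub_nonpos.2 hvw)] at h
  have := le_abs_self (f v - f w)
  linarith

/-- A tilted potential with a single zero `b` close to the stable phase `1`, whose slope
differs from that of `W` by little compared to the speed of its travelling wave. -/
theorem DoubleWell.exists_tilt {W : ℝ → ℝ} (hW : DoubleWell W) {κ : ℝ} (hκ : 0 < κ) :
    ∃ k c₁ ε₀, 0 < k ∧ 0 < c₁ ∧ 0 < ε₀ ∧ ∀ ε, 0 < ε → ε < ε₀ → ∃ (b : ℝ) (G G' : ℝ → ℝ),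
      b ∈ Ioo (1 / 2 : ℝ) 1 ∧ W b = k * ε ∧ (∀ q, HasDerivAt G (G' q) q) ∧ G b = 0 ∧
      G' b < 0 ∧ (∀ q ∈ Icc (-1) b, c₁ * ε * (b - q) ≤ G q) ∧
      ∀ q ∈ Ioc (-1) b, deriv W q - κ * ε * √(2 * G q) ≤ G' q := by
  obtain ⟨c, hc, hWc⟩ := hW.exists_deriv_le
  obtain ⟨hC, hnn, -, hW1, hpos, -, -, -, -, hneg, -⟩ := hW
  obtain ⟨C, hC0, hWC⟩ := exists_sub_le_of_contDiff (hC.of_le (by norm_num))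
  have hdiff : Differentiable ℝ W := hC.differentiable (by norm_num)
  obtain ⟨q₀, hq₀, hmin⟩ := (isCompact_Icc (a := (-(1 / 2) : ℝ)) (b := 1 / 2)).exists_isMinOn
    ⟨0, by norm_num⟩ hC.continuous.continuousOn
  obtain ⟨w₀, hw₀⟩ : ∃ w₀, w₀ = W q₀ := ⟨_, rfl⟩
  have hw₀pos : 0 < w₀ := hw₀ ▸ hpos q₀ ⟨by linarith [hq₀.1], by linarith [hq₀.2]⟩
  have hWw₀ : ∀ q ∈ Icc (-(1 / 2) : ℝ) (1 / 2), w₀ ≤ W q := fun q hq => hw₀ ▸ hmin hq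
  obtain ⟨S, hS⟩ : ∃ S : ℝ → ℝ, S = fun q => Real.smoothTransition (q + 1 / 2) := ⟨_, rfl⟩
  have hSc : ContDiff ℝ 1 S := by
    rw [hS]
    exact Real.smoothTransition.contDiff.comp (by fun_prop)
  have hS0 : ∀ q ≤ -(1 / 2), S q = 0 := fun q hq => by
    rw [hS]
    exact Real.smoothTransition.zero_of_nonpos (by linarith)
  have hS1 : ∀ q, 1 / 2 ≤ q → S q = 1 := fun q hq => by
    rw [hS]
    exact Real.smoothTransition.one_of_one_le (by linarith)
  have hSnn : ∀ q, 0 ≤ S q := fun q => by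
    rw [hS]
    exact Real.smoothTransition.nonneg _
  have hSle : ∀ q, S q ≤ 1 := fun q => by
    rw [hS]
    exact Real.smoothTransition.le_one _
  have hS0' : ∀ q ≤ -(1 / 2), deriv S q = 0 := fun q hq =>
    IsLocalMin.deriv_eq_zero (Eventually.of_forall fun p => by rw [hS0 q hq]; exact hSnn p)
  have hS1' : ∀ q, 1 / 2 ≤ q → deriv S q = 0 := fun q hq =>
    IsLocalMax.deriv_eq_zero (Eventually.of_forall fun p => by rw [hS1 q hq]; exact hSle p)
  obtain ⟨B, hB⟩ := (isCompact_Icc (a := (-(1 / 2) : ℝ)) (b := 1 / 2)).exists_bound_of_continuousOn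
    (hSc.continuous_deriv le_rfl).continuousOn
  have hB0 : 0 ≤ B := (norm_nonneg _).trans (hB 0 (by norm_num))
  obtain ⟨k, hk⟩ : ∃ k, k = κ * √w₀ / (2 * B + 1) := ⟨_, rfl⟩
  have hkpos : 0 < k := by rw [hk]; positivity
  have hkB : 2 * k * B ≤ κ * √w₀ := by
    have : k * (2 * B + 1) = κ * √w₀ := by rw [hk]; field_simp
    linarith
  refine ⟨k, min (k / 2) (c * (k / (C + 1))), w₀ / (2 * k), hkpos, by positivity, by positivity,
    fun ε hε hε₀ => ?_⟩
  have hkε : 2 * (k * ε) < w₀ := by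
    rw [lt_div_iff₀ (by positivity)] at hε₀
    linarith
  have hkε0 : 0 < k * ε := by positivity
  have hhalf := hWw₀ (1 / 2) (by norm_num)
  obtain ⟨b, hb, hWb⟩ := intermediate_value_Ioo' (by norm_num : (1 / 2 : ℝ) ≤ 1)
    hC.continuous.continuousOn (show k * ε ∈ Ioo (W 1) (W (1 / 2)) from
      ⟨by rw [hW1]; exact hkε0, by linarith⟩)
  have hb2 : k * ε ≤ (C + 1) * (1 - b) := by
    have := hWC b ⟨by linarith [hb.1], hb.2.le⟩ 1 (by norm_num) hb.2.le
    rw [hW1, hWb] at this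
    linarith [hb.2]
  refine ⟨b, fun q => W q + k * ε * (1 - 2 * S q), fun q => deriv W q - 2 * (k * ε) * deriv S q,
    hb, hWb, fun q => ?_, ?_, ?_, fun q hq => ?_, fun q hq => ?_⟩
  · have h1 := (((hSc.differentiable one_ne_zero) q).hasDerivAt.const_mul 2).const_sub 1
    refine ((hdiff q).hasDerivAt.add (h1.const_mul (k * ε))).congr_deriv ?_
    ring
  · simp only
    rw [hS1 b hb.1.le, hWb]
    ring
  · simp only
    rw [hS1' b hb.1.le, mul_zero, sub_zero]
    exact hneg b ⟨by linarith [hb.1], hb.2⟩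
  · have hbq : 0 ≤ b - q := sub_nonneg.2 hq.2
    have hWq := hnn q ⟨hq.1, hq.2.trans hb.2.le⟩
    have h1 : min (k / 2) (c * (k / (C + 1))) * ε * (b - q) ≤ k / 2 * ε * (b - q) := by
      gcongr
      exact min_le_left _ _
    have h2 : k / 2 * ε * (b - q) ≤ k * ε := by
      have := mul_le_mul_of_nonneg_left (by linarith [hb.2, hq.1] : b - q ≤ 2) hkε0.le
      linarith
    rcases le_total q (-(1 / 2)) with hq1 | hq1
    · simp only
      rw [hS0 q hq1]
      linarith
    rcases le_total q (1 / 2) with hq2 | hq2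
    · have h3 := hWw₀ q ⟨hq1, hq2⟩
      have h4 := mul_le_mul_of_nonneg_left (hSle q) hkε0.le
      simp only
      linarith
    · simp only
      rw [hS1 q hq2]
      have h3 : min (k / 2) (c * (k / (C + 1))) * ε * (b - q)
          ≤ c * (k / (C + 1)) * ε * (b - q) := by
        gcongr
        exact min_le_right _ _
      have h4 : c * (k / (C + 1)) * ε ≤ c * (1 - b) := by
        have : k * ε / (C + 1) ≤ 1 - b := by
          rw [div_le_iff₀ (by positivity)]
          linarith
        calc c * (k / (C + 1)) * ε = c * (k * ε / (C + 1)) := by ring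
          _ ≤ _ := by gcongr
      have h5 : W b - W q ≤ -(c * (1 - b)) * (b - q) := by
        refine (convex_Icc q b).image_sub_le_mul_sub_of_deriv_le hC.continuous.continuousOn
          hdiff.differentiableOn (fun x hx => ?_) q ⟨le_rfl, hq.2⟩ b ⟨hq.2, le_rfl⟩ hq.2
        rw [interior_Icc] at hx
        refine (hWc x ⟨hq2.trans hx.1.le, hx.2.le.trans hb.2.le⟩).trans ?_
        have := mul_le_mul_of_nonneg_left hx.2.le hc.le
        linarith
      have h6 := mul_le_mul_of_nonneg_right h4 hbq
      rw [hWb] at h5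
      linarith
  · have hP : 0 ≤ κ * ε * √(2 * (W q + k * ε * (1 - 2 * S q))) := by positivity
    rcases le_total q (-(1 / 2)) with hq1 | hq1
    · simp only
      rw [hS0' q hq1]
      linarith
    rcases le_total (1 / 2) q with hq2 | hq2
    · simp only
      rw [hS1' q hq2]
      linarith
    · have h3 := hWw₀ q ⟨hq1, hq2⟩
      have h4 := mul_le_mul_of_nonneg_left (hSle q) hkε0.le
      have h5 : √w₀ ≤ √(2 * (W q + k * ε * (1 - 2 * S q))) := Real.sqrt_le_sqrt (by linarith)
      have h6 : deriv S q ≤ B := (le_abs_self _).trans (hB q ⟨hq1, hq2⟩)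
      have h7 : 2 * (k * ε) * deriv S q ≤ κ * ε * √(2 * (W q + k * ε * (1 - 2 * S q))) :=
        calc 2 * (k * ε) * deriv S q ≤ 2 * (k * ε) * B := by gcongr
          _ = 2 * k * B * ε := by ring
          _ ≤ κ * √w₀ * ε := by gcongr
          _ = κ * ε * √w₀ := by ring
          _ ≤ _ := by gcongr
      simp only
      linarith

/-- The tilted travelling wave profiles, for small `ε`. -/
theorem DoubleWell.exists_barrier_profile {W : ℝ → ℝ} (hW : DoubleWell W) {κ A η δ : ℝ}
    (hκ : 0 < κ) (hA : 0 ≤ A) (hη : 0 < η) (hδ : 0 < δ) :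
    ∃ ε₀ > 0, ∀ ε, 0 < ε → ε < ε₀ → ∃ (b l : ℝ) (G G' Q : ℝ → ℝ),
      1 - η ≤ b ∧ b ≤ 1 - A * ε ^ 2 ∧ deriv W b ≤ 0 ∧ Continuous Q ∧ 0 < l ∧ ε * l ≤ δ ∧
      (∀ z ≤ 0, Q z ≤ -1) ∧ (∀ z, 0 < z → -1 < Q z) ∧ (∀ z, Q z ≤ b) ∧
      (∀ z, l ≤ z → Q z = b) ∧
      (∀ z, 0 < z → ∀ η, 0 < η → ∀ᶠ z' in 𝓝 z,
        Q z + √(2 * G (Q z)) * (z' - z) + (G' (Q z) - η) / 2 * (z' - z) ^ 2 ≤ Q z') ∧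
      ∀ q ∈ Ioc (-1) b, deriv W q - κ * ε * √(2 * G q) ≤ G' q := by
  obtain ⟨k, c₁, ε₀, hk, hc₁, hε₀, hex⟩ := hW.exists_tilt hκ
  have hanti := hW.antitoneOn
  obtain ⟨hC, -, -, hW1, hpos, -, -, -, -, hneg, -⟩ := hW
  obtain ⟨C, hC0, hWC⟩ := exists_sub_le_of_contDiff (hC.of_le (by norm_num))
  obtain ⟨v, hv⟩ : ∃ v, v = max (1 / 2) (1 - η) := ⟨_, rfl⟩
  have hv0 : 1 / 2 ≤ v := hv ▸ le_max_left _ _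
  have hv1 : v < 1 := hv ▸ max_lt (by norm_num) (by linarith)
  have hWv : 0 < W v := hpos v ⟨by linarith, hv1⟩
  refine ⟨min (min ε₀ (W v / k)) (min (min 1 (1 / (2 * (A + 1)))) (min (k / (C * A + 1))
    (c₁ * δ ^ 2 / 4))), by positivity, fun ε hε hlt => ?_⟩
  simp only [lt_min_iff] at hlt
  obtain ⟨⟨hε1, hε2⟩, ⟨hε3, hε4⟩, hε5, hε6⟩ := hlt
  obtain ⟨b, G, G', hb, hWb, hG, hGb, hGb', hlow, hGW⟩ := hex ε hε hε1
  obtain ⟨Q, l, hQc, hl, hll, hQ0, hQpos, hQb, hQl, hQt⟩ :=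
    exists_profile (by linarith [hb.1] : -1 < b) hG hGb hGb' (by positivity) hlow
  rw [lt_div_iff₀ hk] at hε2
  rw [lt_div_iff₀ (by positivity)] at hε4 hε5
  refine ⟨b, l, G, G', Q, ?_, ?_, (hneg b ⟨by linarith [hb.1], hb.2⟩).le, hQc, hl, ?_, hQ0,
    hQpos, hQb, hQl, hQt, hGW⟩
  · refine (hv ▸ le_max_right _ _ : 1 - η ≤ v).trans ?_
    by_contra! h
    have := hanti ⟨by linarith [hb.1], hb.2.le⟩ ⟨by linarith, hv1.le⟩ h.le
    linarith
  · by_contra! h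
    have h1 : A * ε ^ 2 ≤ A * ε := by
      refine mul_le_mul_of_nonneg_left ?_ hA
      rw [sq]
      exact mul_le_of_le_one_left hε.le hε3.le
    have h0 : 0 ≤ A * ε ^ 2 := by positivity
    have h2 := hanti ⟨by linarith, by linarith⟩ ⟨by linarith [hb.1], hb.2.le⟩ h.le
    have h3 := hWC (1 - A * ε ^ 2) ⟨by linarith, by linarith⟩ 1 (by norm_num) (by linarith)
    rw [hW1] at h3
    have h4 := mul_lt_mul_of_pos_right hε5 hε
    have h5 : 0 < ε * ε := by positivity
    linarith
  · obtain ⟨y, hy⟩ : ∃ y, y = √(c₁ * ε) := ⟨_, rfl⟩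
    have hy0 : 0 < y := by rw [hy]; positivity
    have hy2 : y ^ 2 = c₁ * ε := by rw [hy]; exact Real.sq_sqrt (by positivity)
    have h1 : l * y ≤ 2 := by
      have h2 : √(b - -1) ≤ √2 := Real.sqrt_le_sqrt (by linarith [hb.2])
      have h3 : √(2 * (c₁ * ε)) = √2 * y := by rw [hy, Real.sqrt_mul (by norm_num)]
      rw [h3] at hll
      have h4 : l ≤ 2 / (√2 * y) * √2 := hll.trans (by gcongr)
      calc l * y ≤ 2 / (√2 * y) * √2 * y := by gcongr
        _ = 2 := by field_simp
    have h2 : y ≤ c₁ * δ / 2 := by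
      refine le_of_sq_le_sq ?_ (by positivity)
      rw [hy2]
      have := mul_le_mul_of_nonneg_left hε6.le hc₁.le
      linarith
    have h3 : c₁ * (ε * l) ≤ c₁ * δ :=
      calc c₁ * (ε * l) = y * (l * y) := by rw [← mul_assoc, ← hy2]; ring
        _ ≤ y * 2 := by gcongr
        _ ≤ _ := by linarith
    exact le_of_mul_le_mul_left h3 hc₁

theorem liminfStar_eq_one_iff {d : ℕ} {uu : ℝ → Euc d × ℝ → ℝ}
    (h : ∀ ε : ℝ, 0 < ε → ∀ p : Euc d × ℝ, 0 ≤ p.2 → uu ε p ∈ Icc (-1 : ℝ) 1)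
    {p : Euc d × ℝ} (hp : 0 ≤ p.2) :
    liminfStar uu p = 1 ↔ ∀ η > 0, ∃ δ > 0, ∀ (ε : ℝ) (y : Euc d) (s : ℝ), 0 < ε → 0 < s →
      ε + ‖p.1 - y‖ + |p.2 - s| ≤ δ → 1 - η ≤ uu ε (y, s) := by
  obtain ⟨V, hV⟩ : ∃ V : {r : ℝ // 0 < r} → Set ℝ, ∀ δ, V δ = {r : ℝ | ∃ (ε : ℝ) (y : Euc d)
      (s : ℝ), 0 < ε ∧ 0 < s ∧ ε + ‖p.1 - y‖ + |p.2 - s| ≤ (δ : ℝ) ∧ r = uu ε (y, s)} :=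
    ⟨_, fun δ => rfl⟩
  have hlim : liminfStar uu p = ⨆ δ, sInf (V δ) := by
    simp only [hV]
    rfl
  have hne : ∀ δ, (V δ).Nonempty := fun δ => by
    have hδ := δ.2
    refine ⟨uu (δ / 2) (p.1, p.2 + δ / 2), ?_⟩
    rw [hV]
    refine ⟨δ / 2, p.1, p.2 + δ / 2, by positivity, by positivity, ?_, rfl⟩
    rw [sub_self, norm_zero, sub_add_cancel_left, abs_neg, abs_of_pos (by positivity)]
    linarith
  have hVmem : ∀ δ, V δ ⊆ Icc (-1) 1 := fun δ r hr => by
    rw [hV] at hr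
    obtain ⟨ε, y, s, hε, hs, -, rfl⟩ := hr
    exact h ε hε (y, s) hs.le
  have hVb : ∀ δ, BddBelow (V δ) := fun δ => bddBelow_Icc.mono (hVmem δ)
  have hle : ∀ δ, sInf (V δ) ≤ 1 := fun δ => by
    obtain ⟨r, hr⟩ := hne δ
    exact (csInf_le (hVb δ) hr).trans (hVmem δ hr).2
  have hbdd : BddAbove (range fun δ => sInf (V δ)) := ⟨1, by
    rintro _ ⟨δ, rfl⟩
    exact hle δ⟩
  have : Nonempty {r : ℝ // 0 < r} := ⟨⟨1, one_pos⟩⟩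
  rw [hlim]
  constructor
  · intro h1 η hη
    obtain ⟨δ, hδ⟩ := exists_lt_of_lt_ciSup (f := fun δ => sInf (V δ))
      (show 1 - η < ⨆ δ, sInf (V δ) by rw [h1]; linarith)
    refine ⟨δ, δ.2, fun ε y s hε hs hle => hδ.le.trans (csInf_le (hVb δ) ?_)⟩
    rw [hV]
    exact ⟨ε, y, s, hε, hs, hle, rfl⟩
  · intro hη
    refine le_antisymm (ciSup_le hle) (le_of_forall_sub_le fun η hη0 => ?_)
    obtain ⟨δ, hδ, hδu⟩ := hη η hη0
    refine le_trans ?_ (le_ciSup hbdd ⟨δ, hδ⟩)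
    refine le_csInf (hne _) fun r hr => ?_
    rw [hV] at hr
    obtain ⟨ε, y, s, hε, hs, hle, rfl⟩ := hr
    exact hδu ε y s hε hs hle

theorem IsCompact.exists_half_le {d : ℕ} {uu : ℝ → Euc d × ℝ → ℝ} {K : Set (Euc d)}
    (hK : IsCompact K) {t₀ : ℝ}
    (h : ∀ x ∈ K, ∃ δ > 0, ∀ (ε : ℝ) (y : Euc d) (s : ℝ), 0 < ε → 0 < s →
      ε + ‖x - y‖ + |t₀ - s| ≤ δ → 1 / 2 ≤ uu ε (y, s)) :
    ∃ δ > 0, ∀ (ε : ℝ) (y : Euc d) (s : ℝ), 0 < ε → 0 < s → ε ≤ δ → y ∈ K → |t₀ - s| ≤ δ →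
      1 / 2 ≤ uu ε (y, s) := by
  refine hK.induction_on (p := fun K => ∃ δ > 0, ∀ (ε : ℝ) (y : Euc d) (s : ℝ), 0 < ε → 0 < s →
    ε ≤ δ → y ∈ K → |t₀ - s| ≤ δ → 1 / 2 ≤ uu ε (y, s)) ?_ ?_ ?_ ?_
  · exact ⟨1, one_pos, fun ε y s _ _ _ hy => hy.elim⟩
  · rintro A B hAB ⟨δ, hδ, hB⟩
    exact ⟨δ, hδ, fun ε y s hε hs hεδ hy => hB ε y s hε hs hεδ (hAB hy)⟩
  · rintro A B ⟨δ, hδ, hA⟩ ⟨δ', hδ', hB⟩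
    refine ⟨min δ δ', lt_min hδ hδ', fun ε y s hε hs hεδ hy hst => ?_⟩
    rw [le_min_iff] at hεδ hst
    rcases hy with hy | hy
    · exact hA ε y s hε hs hεδ.1 hy hst.1
    · exact hB ε y s hε hs hεδ.2 hy hst.2
  · intro x hx
    obtain ⟨δ, hδ, hxδ⟩ := h x hx
    refine ⟨Metric.ball x (δ / 3), mem_nhdsWithin_of_mem_nhds (Metric.ball_mem_nhds x (by
      positivity)), δ / 3, by positivity, fun ε y s hε hs hεδ hy hst => hxδ ε y s hε hs ?_⟩
    rw [Metric.mem_ball, dist_comm, dist_eq_norm] at hy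
    linarith

/-- Theorem 7.2: finite speed of shrinking of the limit phase Ω_t^{(1)}. -/
theorem finite_speed_of_shrinking (d : ℕ) (hd : 2 ≤ d)
    (m : Euc d → Euc d → ℝ) (θ Θ : ℝ) (hm : Mobility d m θ Θ)
    (W : ℝ → ℝ) (hW : DoubleWell W)
    (u₀ : Euc d → ℝ) (hu₀c : UniformContinuous u₀)
    (hu₀r : ∀ x, u₀ x ∈ Set.Icc (-1:ℝ) 1)
    (uu : ℝ → Euc d × ℝ → ℝ)
    (huu : ∀ ε : ℝ, 0 < ε →
      ContinuousOn (uu ε) {p : Euc d × ℝ | 0 ≤ p.2} ∧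
      (∀ p : Euc d × ℝ, 0 ≤ p.2 → uu ε p ∈ Set.Icc (-1:ℝ) 1) ∧
      (∀ x, uu ε (x, 0) = u₀ x) ∧
      IsEpsSolution m W ε (uu ε))
    (R : ℝ) (hR : 0 < R) (t₀ : ℝ) (ht₀ : 0 ≤ t₀) (x₀ : Euc d)
    (hball : ∀ x : Euc d, ‖x - x₀‖ < R → liminfStar uu (x, t₀) = 1)
    (θl : ℝ) (hθl : 0 < θl) (hθlθ : θl < θ) :
    ∀ s ∈ Set.Icc (0:ℝ) (θl * R^2 / (2 * (d - 1))),
      ∀ x : Euc d, ‖x - x₀‖ < Real.sqrt (R^2 - 2 * θl⁻¹ * (d - 1) * s) →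
        liminfStar uu (x, t₀ + s) = 1 := by
  rintro s ⟨hs0, -⟩ x hx
  rcases hs0.eq_or_lt with rfl | hs
  · rw [add_zero]
    refine hball x ?_
    rwa [mul_zero, sub_zero, Real.sqrt_sq hR.le] at hx
  have huI : ∀ ε : ℝ, 0 < ε → ∀ p : Euc d × ℝ, 0 ≤ p.2 → uu ε p ∈ Icc (-1 : ℝ) 1 :=
    fun ε hε => (huu ε hε).2.1
  obtain ⟨-, -, hθ, hmθ, -⟩ := hm
  have hΘ : 0 < Θ := hθ.trans_le ((hmθ 0 0).1.trans (hmθ 0 0).2)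
  have hd1 : (0 : ℝ) < d - 1 := by
    have : (2 : ℝ) ≤ d := by exact_mod_cast hd
    linarith
  obtain ⟨Λ, hΛ⟩ : ∃ Λ, Λ = 2 * θl⁻¹ * (d - 1) := ⟨_, rfl⟩
  have hΛpos : 0 < Λ := by rw [hΛ]; positivity
  rw [← hΛ, Real.lt_sqrt (norm_nonneg _)] at hx
  -- the geometric parameters
  obtain ⟨h, hh0, hhs, hhR⟩ : ∃ h, 0 < h ∧ h < s / 2 ∧
      (‖x - x₀‖ + 3 * h) ^ 2 + Λ * (s + 2 * h) < R ^ 2 := by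
    have hcont : ContinuousAt (fun h => (‖x - x₀‖ + 3 * h) ^ 2 + Λ * (s + 2 * h)) 0 := by fun_prop
    have h1 := hcont.eventually_lt (continuousAt_const (y := R ^ 2))
      (by simp only [mul_zero, add_zero]; linarith)
    have h2 : ∀ᶠ h in 𝓝[>] (0 : ℝ), h < s / 2 :=
      mem_nhdsWithin_of_mem_nhds (Iio_mem_nhds (half_pos hs))
    obtain ⟨h, h3, h4, h5⟩ :=
      ((h1.filter_mono nhdsWithin_le_nhds).and (h2.and self_mem_nhdsWithin)).exists
    exact ⟨h, h5, h4, h3⟩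
  obtain ⟨R', hR'⟩ : ∃ R', R' = √((‖x - x₀‖ + 3 * h) ^ 2 + Λ * (s + 2 * h)) := ⟨_, rfl⟩
  have hR'pos : 0 < R' := by rw [hR']; positivity
  have hR'sq : R' ^ 2 = (‖x - x₀‖ + 3 * h) ^ 2 + Λ * (s + 2 * h) := by
    rw [hR']
    exact Real.sq_sqrt (by positivity)
  have hR'R : R' < R := by
    rw [← hR'sq] at hhR
    exact lt_of_pow_lt_pow_left₀ 2 hR.le hhR
  -- the solutions are at least `1 / 2` near time `t₀`
  obtain ⟨δ₀, hδ₀, hhalf⟩ := (isCompact_closedBall x₀ ((R + R') / 2)).exists_half_le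
    (uu := uu) (t₀ := t₀) (fun y hy => by
      rw [mem_closedBall_iff_norm] at hy
      obtain ⟨δ, hδ, hyδ⟩ := (liminfStar_eq_one_iff huI ht₀).1 (hball y (by linarith)) (1 / 2)
        (by norm_num)
      exact ⟨δ, hδ, fun ε z s hε hs hle => by linarith [hyδ ε z s hε hs hle]⟩)
  obtain ⟨τ, hτ⟩ : ∃ τ, τ = min (s / 4) (δ₀ / 4) := ⟨_, rfl⟩
  have hτ0 : 0 < τ := by rw [hτ]; positivity
  have hτs : τ ≤ s / 4 := hτ ▸ min_le_left _ _
  have hτδ : τ ≤ δ₀ / 4 := hτ ▸ min_le_right _ _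
  obtain ⟨t₁, ht₁⟩ : ∃ t₁, t₁ = t₀ + 2 * τ := ⟨_, rfl⟩
  obtain ⟨T, hT⟩ : ∃ T, T = t₀ + s + 2 * h := ⟨_, rfl⟩
  obtain ⟨ρ, hρ⟩ : ∃ ρ, ρ = (R - R') / 2 := ⟨_, rfl⟩
  have hρ0 : 0 < ρ := by linarith
  obtain ⟨c, hc, hWc⟩ := hW.exists_deriv_le
  obtain ⟨A, hA⟩ : ∃ A, A = (Θ / τ + d / ρ ^ 2) / c := ⟨_, rfl⟩
  have hA0 : 0 ≤ A := by rw [hA]; positivity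
  have hinit : ∀ ε, 0 < ε → ε < δ₀ → ∀ y, ‖y - x₀‖ ≤ R' → 1 - A * ε ^ 2 ≤ uu ε (y, t₁) := by
    intro ε hε hεδ y hy
    rw [hA]
    refine (huu ε hε).2.2.2.one_sub_le_of_half_le hθ hmθ hc hWc hε (huu ε hε).1 (huI ε hε) hρ0 hτ0
      (by linarith) fun z s' hz hs' => ?_
    rw [abs_le] at hs'
    refine hhalf ε z s' hε (by linarith) hεδ.le ?_ (abs_le.2 ⟨by linarith, by linarith⟩)
    rw [mem_closedBall_iff_norm]
    have := norm_sub_le_norm_sub_add_norm_sub z y x₀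
    linarith
  have hrlow : ∀ t ≤ T, ‖x - x₀‖ + 3 * h ≤ √(R' ^ 2 - Λ * (t - t₁)) := by
    intro t ht
    refine Real.le_sqrt_of_sq_le ?_
    have := mul_le_mul_of_nonneg_left (by linarith : t - t₁ ≤ s + 2 * h) hΛpos.le
    linarith
  have hrup : ∀ t, t₁ ≤ t → √(R' ^ 2 - Λ * (t - t₁)) ≤ R' := by
    intro t ht
    refine Real.sqrt_le_iff.2 ⟨hR'pos.le, ?_⟩
    have := mul_nonneg hΛpos.le (sub_nonneg.2 ht)
    linarith
  obtain ⟨σ, hσ⟩ : ∃ σ, σ = (1 + θl / θ) / 2 := ⟨_, rfl⟩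
  have hratio : θl / θ < 1 := (div_lt_one hθ).2 hθlθ
  have hratio0 : 0 < θl / θ := by positivity
  have hσ0 : 0 < σ := by linarith
  have hσ1 : σ < 1 := by linarith
  have hσinv : 0 < θ / θl - 1 / σ := by
    rw [sub_pos, ← one_div_div θl θ]
    exact one_div_lt_one_div_of_lt hratio0 (by linarith)
  obtain ⟨κ, hκ⟩ : ∃ κ, κ = (d - 1) / R' * (θ / θl - 1 / σ) := ⟨_, rfl⟩
  have hκ0 : 0 < κ := by rw [hκ]; positivity
  obtain ⟨L, hL0, hL⟩ := exists_sub_le_of_contDiff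
    (((contDiff_succ_iff_deriv (n := 2)).1 hW.1).2.2.of_le (by norm_num))
  refine (liminfStar_eq_one_iff huI (by positivity)).2 fun η hη => ?_
  have hσh : 0 < (1 - σ) * (3 * h) := mul_pos (by linarith) (by linarith)
  obtain ⟨ε₀, hε₀, hprof⟩ := hW.exists_barrier_profile hκ0 hA0 hη (lt_min hh0 hσh)
  refine ⟨min (min ε₀ δ₀) h / 2, by positivity, fun ε y s' hε hs' hle => ?_⟩
  have hε1 := min_le_left (min ε₀ δ₀) h
  have hε2 := min_le_right (min ε₀ δ₀) h
  have hε3 := min_le_left ε₀ δ₀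
  have hε4 := min_le_right ε₀ δ₀
  have hxy := norm_nonneg (x - y)
  have hss := abs_nonneg (t₀ + s - s')
  simp only at hle
  have hss' : |t₀ + s - s'| < h := by linarith
  rw [abs_lt] at hss'
  obtain ⟨b, l, G, G', Q, hηb, hbA, hWb, hQc, hl, hεl, hQ0, hQpos, hQb, hQl, hQt, hGW⟩ :=
    hprof ε hε (by linarith)
  rw [le_min_iff] at hεl
  have hbar := (huu ε hε).2.2.2.barrier_le (x₀ := x₀) (t₁ := t₁) (T := T) (Λ := Λ) (ρ₀ := R')
    hθ (fun y v => (hmθ y v).1) hL0 hL hε (huu ε hε).1 (huI ε hε)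
    (hbA.trans (sub_le_self _ (by positivity))) hWb hQc hQ0 hQpos hQb hQl hQt hGW (by linarith)
    hΛpos.le hR'pos.le
    (by
      have := hrlow T le_rfl
      exact Real.sqrt_pos.1 (by linarith [norm_nonneg (x - x₀)]))
    (by
      intro t ht ρ' hρ'
      have h1 := hrlow t ht.2
      have h2 := hrup t ht.1
      obtain ⟨r, hr⟩ : ∃ r, r = √(R' ^ 2 - Λ * (t - t₁)) := ⟨_, rfl⟩
      rw [← hr] at h1 h2 hρ' ⊢
      have hr0 : 0 < r := by linarith [norm_nonneg (x - x₀)]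
      have h3 : (1 - σ) * (3 * h) ≤ (1 - σ) * r :=
        mul_le_mul_of_nonneg_left (by linarith [norm_nonneg (x - x₀)]) (by linarith)
      have h4 : σ * r ≤ ρ' := by linarith [hεl.2]
      have h5 : 0 < σ * r := by positivity
      refine ⟨h5.trans_le h4, ?_⟩
      calc (d - 1) / ρ' - θ * (Λ / (2 * r)) ≤ (d - 1) / (σ * r) - θ * (Λ / (2 * r)) := by gcongr
        _ = -((d - 1) / r * (θ / θl - 1 / σ)) := by
          rw [hΛ]
          field_simp
          ring
        _ ≤ -κ := by
          rw [hκ]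
          gcongr)
    (fun y hy => hbA.trans (hinit ε hε (by linarith) y hy)) y s' (by linarith) (by linarith)
  refine hηb.trans ?_
  rwa [hQl] at hbar
  rw [le_div_iff₀ hε]
  have h1 := hrlow s' (by linarith)
  have h2 := norm_sub_le_norm_sub_add_norm_sub y x x₀
  rw [norm_sub_rev y x] at h2
  linarith [hεl.1]

end
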